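/- arXiv:2508.09723 — 3 statements merged into one kernel-verified Lean document; each statement's English description precedes it below -/
import Mathlib

section
/- Let u, v_1, v_2, v_3 be formal Laurent series in q with integer coefficients, let l, s_1, s_2, s_3 be integers, and suppose that for each k with l ≤ k ≤ l+6 there exist Laurent polynomials p_k^{(1)}, p_k^{(2)}, p_k^{(3)} ∈ ℤ[x, x^{−1}] such that U_7(u·t^k) = v_1·p_k^{(1)}(t) + v_2·p_k^{(2)}(t) + v_3·p_k^{(3)}(t) and the lowest exponent occurring in p_k^{(i)} is at least ⌈(k + s_i)/7⌉ for i = 1, 2, 3. Then for every integer k there exist Laurent polynomials p_k^{(1)}, p_k^{(2)}, p_k^{(3)} ∈ ℤ[x, x^{−1}] with U_7(u·t^k) = v_1·p_k^{(1)}(t) + v_2·p_k^{(2)}(t) + v_3·p_k^{(3)}(t) and lowest exponent of p_k^{(i)} at least ⌈(k + s_i)/7⌉. -/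
noncomputable section

/-- `J b = ∏_{k=1}^∞ (1 - q^{b·k})` as a formal power series with integer coefficients. -/
def J (b : ℕ) : PowerSeries ℤ :=
  PowerSeries.mk fun n =>
    PowerSeries.coeff n
      (∏ k ∈ Finset.range (n + 1), (1 - (PowerSeries.X : PowerSeries ℤ) ^ (b * (k + 1))))

/-- Evaluation of a Laurent polynomial (given by its finitely supported coefficient
function `p : ℤ →₀ ℤ`) at the invertible Laurent series `T`. -/
def evalT (T : (LaurentSeries ℤ)ˣ) (p : ℤ →₀ ℤ) : LaurentSeries ℤ :=
  p.sum fun n c => c • ((T ^ n : (LaurentSeries ℤ)ˣ) : LaurentSeries ℤ)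


theorem algF {K : Type*} [CommRing K] (a b : K) (r : a^2*b^3 - a^3*b = 1) (x z : K)
    (hx : x = a + b + a^2 - a*b^2 - 1)
    (hz : z = -(3*a^3*b - a*b^5 + a^7 - a^6*b^2) - 8) :
    (-1)*z^2 + (343)*x + (49)*x*z + (343)*x^2 + (35)*x^2*z + (147)*x^3 + (7)*x^3*z + (49)*x^4 + (21)*x^5 + (7)*x^6 + x^7 = 0 := by
  subst hx hz
  linear_combination ((9)
      + (28)*b
      + (42)*b^2
      + (-14)*b^4
      + (-1)*b^7
      + (28)*a
      + (84)*a*b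
      + (-28)*a*b^2
      + (-140)*a*b^3
      + (61)*a*b^5
      + (-7)*a*b^6
      + (-14)*a*b^7
      + (70)*a^2
      + (84)*a^2*b
      + (-168)*a^2*b^2
      + (-47)*a^2*b^3
      + (238)*a^2*b^4
      + (21)*a^2*b^5
      + (-119)*a^2*b^6
      + (7)*a^2*b^7
      + (28)*a^2*b^8
      + (84)*a^3
      + (-80)*a^3*b
      + (-280)*a^3*b^2
      + (196)*a^3*b^3
      + (238)*a^3*b^4
      + (-238)*a^3*b^5
      + (-84)*a^3*b^6
      + (105)*a^3*b^7
      + (-1)*a^3*b^8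
      + (-21)*a^3*b^9
      + (28)*a^4
      + (-196)*a^4*b
      + (-28)*a^4*b^2
      + (462)*a^4*b^3
      + (-49)*a^4*b^4
      + (-315)*a^4*b^5
      + (110)*a^4*b^6
      + (84)*a^4*b^7
      + (-42)*a^4*b^8
      + (7)*a^4*b^10
      + (-56)*a^5
      + (-196)*a^5*b
      + (210)*a^5*b^2
      + (259)*a^5*b^3
      + (-327)*a^5*b^4
      + (-91)*a^5*b^5
      + (168)*a^5*b^6
      + (-21)*a^5*b^7
      + (-35)*a^5*b^8
      + (7)*a^5*b^9
      + (-1)*a^5*b^11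
      + (-84)*a^6
      + (-42)*a^6*b
      + (283)*a^6*b^2
      + (-7)*a^6*b^3
      + (-231)*a^6*b^4
      + (84)*a^6*b^5
      + (70)*a^6*b^6
      + (-35)*a^6*b^7
      + (6)*a^6*b^9
      + (-62)*a^7
      + (35)*a^7*b
      + (126)*a^7*b^2
      + (-105)*a^7*b^3
      + (-70)*a^7*b^4
      + (63)*a^7*b^5
      + (-15)*a^7*b^7
      + (-21)*a^8
      + (42)*a^8*b
      + (35)*a^8*b^2
      + (-49)*a^8*b^3
      + (20)*a^8*b^5
      + (-7)*a^9
      + (14)*a^9*b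
      + (-15)*a^9*b^3
      + (5)*a^10*b) * r

theorem algG {K : Type*} [CommRing K] (x z : K)
    (h : (-1)*z^2 + (343)*x + (49)*x*z + (343)*x^2 + (35)*x^2*z + (147)*x^3 + (7)*x^3*z + (49)*x^4 + (21)*x^5 + (7)*x^6 + x^7 = 0) :
    (-1)*(x^4)^0*z^8 + (13841287201)*(x^4) + (7909306972)*(x^4)*z + (1856265922)*(x^4)*z^2 + (224003696)*(x^4)*z^3 + (14201915)*(x^4)*z^4 + (422576)*(x^4)*z^5 + (4018)*(x^4)*z^6 + (282475249)*(x^4)^2 + (161414428)*(x^4)^2*z + (37882978)*(x^4)^2*z^2 + (4571504)*(x^4)^2*z^3 + (289835)*(x^4)^2*z^4 + (8624)*(x^4)^2*z^5 + (5764801)*(x^4)^3 + (3294172)*(x^4)^3*z + (773122)*(x^4)^3*z^2 + (93296)*(x^4)^3*z^3 + (5915)*(x^4)^3*z^4 + (117649)*(x^4)^4 + (67228)*(x^4)^4*z + (15778)*(x^4)^4*z^2 + (1904)*(x^4)^4*z^3 + (2401)*(x^4)^5 + (1372)*(x^4)^5*z + (322)*(x^4)^5*z^2 + (49)*(x^4)^6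 + (28)*(x^4)^6*z + (x^4)^7 = 0 := by
  have h2 : ∀ y, y = x^2 → (-1)*z^4 + (117649)*y + (33614)*y*z + (3087)*y*z^2 + (70)*y*z^3 + (-16807)*y^2 + (-4802)*y^2*z + (-441)*y^2*z^2 + (2401)*y^3 + (686)*y^3*z + (63)*y^3*z^2 + (-343)*y^4 + (-98)*y^4*z + (49)*y^5 + (14)*y^5*z + (-7)*y^6 + y^7 = 0 := by
    intro y hy
    subst hy
    linear_combination (-((-1)*z^2 + (-343)*x + (-49)*x*z + (343)*x^2 + (35)*x^2*z + (-147)*x^3 + (-7)*x^3*z + (49)*x^4 + (-21)*x^5 + (7)*x^6 + (-1)*x^7)) * h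
  have h3 := h2 _ rfl
  generalize hy : x^2 = y at h3
  have h4 : x^4 = y^2 := by rw [← hy]; ring
  rw [h4]
  linear_combination (-((-1)*z^4 + (-117649)*y + (-33614)*y*z + (-3087)*y*z^2 + (-70)*y*z^3 + (-16807)*y^2 + (-4802)*y^2*z + (-441)*y^2*z^2 + (-2401)*y^3 + (-686)*y^3*z + (-63)*y^3*z^2 + (-343)*y^4 + (-98)*y^4*z + (-49)*y^5 + (-14)*y^5*z + (-7)*y^6 + (-1)*y^7)) * h3

def cT (j m : ℕ) : ℤ :=
  (([[0, 0, 0, 0, 0, 0, 0],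
    [28, 49, 0, 0, 0, 0, 0],
    [322, 1372, 2401, 0, 0, 0, 0],
    [1904, 15778, 67228, 117649, 0, 0, 0],
    [5915, 93296, 773122, 3294172, 5764801, 0, 0],
    [8624, 289835, 4571504, 37882978, 161414428, 282475249, 0],
    [4018, 422576, 14201915, 224003696, 1856265922, 7909306972, 13841287201]] : List (List ℤ)).getD j []).getD m 0

theorem algT {K : Type*} [CommRing K] (x z t s : K) (hs : z * s = 1) (ht : t * s * x^4 = 1)
    (h : (-1)*z^2 + (343)*x + (49)*x*z + (343)*x^2 + (35)*x^2*z + (147)*x^3 + (7)*x^3*z + (49)*x^4 + (21)*x^5 + (7)*x^6 + x^7 = 0) :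
    t^7 = s + ∑ j ∈ Finset.range 7, ∑ m ∈ Finset.range 7, (cT j m : K) * (s^(m+1) * t^j) := by
  have h1 := algG x z h
  generalize x^4 = w at h1 ht
  simp only [Finset.sum_range_succ, Finset.sum_range_zero, cT]
  have hw : t * w = z := by linear_combination z * ht - t * w * hs
  have h2 : (1)*z^7*t^0 + (49)*z^6*t^1 + (28)*z^7*t^1 + (2401)*z^5*t^2 + (1372)*z^6*t^2 + (322)*z^7*t^2 + (117649)*z^4*t^3 + (67228)*z^5*t^3 + (15778)*z^6*t^3 + (1904)*z^7*t^3 + (5764801)*z^3*t^4 + (3294172)*z^4*t^4 + (773122)*z^5*t^4 + (93296)*z^6*t^4 + (5915)*z^7*t^4 + (282475249)*z^2*t^5 + (161414428)*z^3*t^5 + (37882978)*z^4*t^5 + (4571504)*z^5*t^5 + (289835)*z^6*t^5 + (8624)*z^7*t^5 + (13841287201)*z^1*t^6 + (7909306972)*z^2*t^6 + (1856265922)*z^3*t^6 + (224003696)*z^4*t^6 + (14201915)*z^5*t^6 + (422576)*z^6*t^6 + (4018)*z^7*t^6 + (-1)*z^8*t^7 = 0 := by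
    subst hw
    linear_combination t^7 * h1
  simp
  have hk : ∀ k : ℕ, z^k * s^k = 1 := fun k => by rw [← mul_pow, hs, one_pow]
  linear_combination (-s^8) * h2 - (t^7) * hk 8 + s * hk 7  + (49*s^2*t^1)*hk 6 + (28*s^1*t^1)*hk 7 + (2401*s^3*t^2)*hk 5 + (1372*s^2*t^2)*hk 6 + (322*s^1*t^2)*hk 7 + (117649*s^4*t^3)*hk 4 + (67228*s^3*t^3)*hk 5 + (15778*s^2*t^3)*hk 6 + (1904*s^1*t^3)*hk 7 + (5764801*s^5*t^4)*hk 3 + (3294172*s^4*t^4)*hk 4 + (773122*s^3*t^4)*hk 5 + (93296*s^2*t^4)*hk 6 + (5915*s^1*t^4)*hk 7 + (282475249*s^6*t^5)*hk 2 + (161414428*s^5*t^5)*hk 3 + (37882978*s^4*t^5)*hk 4 + (4571504*s^3*t^5)*hk 5 + (289835*s^2*t^5)*hk 6 + (8624*s^1*t^5)*hk 7 + (13841287201*s^7*t^6)*hk 1 + (7909306972*s^6*t^6)*hk 2 + (1856265922*s^5*t^6)*hk 3 + (224003696*s^4*t^6)*hk 4 + (14201915*s^3*t^6)*hk 5 +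 (422576*s^2*t^6)*hk 6 + (4018*s^1*t^6)*hk 7

/-- the lattice of elements reachable with bound `B`. -/
def RepE (T : (LaurentSeries ℤ)ˣ) (B : ℤ) (x : LaurentSeries ℤ) : Prop :=
  ∃ p : ℤ →₀ ℤ, x = evalT T p ∧ ∀ n ∈ p.support, B ≤ n

theorem RepE.zero (T : (LaurentSeries ℤ)ˣ) (B : ℤ) : RepE T B 0 :=
  ⟨0, by simp [evalT], by simp⟩

theorem RepE.add {T : (LaurentSeries ℤ)ˣ} {B : ℤ} {x y : LaurentSeries ℤ}
    (hx : RepE T B x) (hy : RepE T B y) : RepE T B (x + y) := by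
  obtain ⟨p, rfl, hp⟩ := hx
  obtain ⟨q, rfl, hq⟩ := hy
  refine ⟨p + q, ?_, ?_⟩
  · unfold evalT
    rw [Finsupp.sum_add_index']
    · intro a; simp
    · intro a b c; rw [add_smul]
  · intro n hn
    rcases Finset.mem_union.1 (Finsupp.support_add hn) with h | h
    · exact hp n h
    · exact hq n h

theorem RepE.smul {T : (LaurentSeries ℤ)ˣ} {B : ℤ} {x : LaurentSeries ℤ} (c : ℤ)
    (hx : RepE T B x) : RepE T B (c • x) := by
  obtain ⟨p, rfl, hp⟩ := hx
  refine ⟨c • p, ?_, ?_⟩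
  · unfold evalT
    rw [Finsupp.sum_smul_index' (by intro i; simp), Finsupp.smul_sum]
    simp only [smul_smul, smul_eq_mul]
  · intro n hn
    exact hp n (Finsupp.support_smul hn)

theorem RepE.shift {T : (LaurentSeries ℤ)ˣ} {B : ℤ} {x : LaurentSeries ℤ} (m : ℤ)
    (hx : RepE T B x) : RepE T (B + m) (((T ^ m : (LaurentSeries ℤ)ˣ) : LaurentSeries ℤ) * x) := by
  obtain ⟨p, rfl, hp⟩ := hx
  refine ⟨p.embDomain (addRightEmbedding m), ?_, ?_⟩
  · unfold evalT
    rw [Finsupp.sum_embDomain, Finsupp.mul_sum]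
    refine Finsupp.sum_congr fun n _ => ?_
    rw [mul_smul_comm, addRightEmbedding_apply, zpow_add, Units.val_mul, mul_comm]
  · intro n hn
    rw [Finsupp.support_embDomain, Finset.mem_map] at hn
    obtain ⟨a, ha, rfl⟩ := hn
    have := hp a ha
    simp only [addRightEmbedding_apply]; omega

theorem RepE.mono {T : (LaurentSeries ℤ)ˣ} {B B' : ℤ} {x : LaurentSeries ℤ} (h : B' ≤ B)
    (hx : RepE T B x) : RepE T B' x := by
  obtain ⟨p, rfl, hp⟩ := hx
  exact ⟨p, rfl, fun n hn => h.trans (hp n hn)⟩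

/-- combined representability -/
def RepV (T : (LaurentSeries ℤ)ˣ) (v₁ v₂ v₃ : LaurentSeries ℤ) (s₁ s₂ s₃ : ℤ) (k : ℤ)
    (x : LaurentSeries ℤ) : Prop :=
  ∃ a b c, x = v₁ * a + v₂ * b + v₃ * c ∧ RepE T ⌈((k + s₁ : ℤ) : ℚ) / 7⌉ a ∧
    RepE T ⌈((k + s₂ : ℤ) : ℚ) / 7⌉ b ∧ RepE T ⌈((k + s₃ : ℤ) : ℚ) / 7⌉ c

section
variable {T : (LaurentSeries ℤ)ˣ} {v₁ v₂ v₃ : LaurentSeries ℤ} {s₁ s₂ s₃ : ℤ} {k : ℤ}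
  {x y : LaurentSeries ℤ}

theorem RepV.add (hx : RepV T v₁ v₂ v₃ s₁ s₂ s₃ k x) (hy : RepV T v₁ v₂ v₃ s₁ s₂ s₃ k y) :
    RepV T v₁ v₂ v₃ s₁ s₂ s₃ k (x + y) := by
  obtain ⟨a, b, c, rfl, h1, h2, h3⟩ := hx
  obtain ⟨a', b', c', rfl, h1', h2', h3'⟩ := hy
  exact ⟨a + a', b + b', c + c', by ring, h1.add h1', h2.add h2', h3.add h3'⟩

theorem RepV.zero : RepV T v₁ v₂ v₃ s₁ s₂ s₃ k 0 :=
  ⟨0, 0, 0, by ring, RepE.zero _ _, RepE.zero _ _, RepE.zero _ _⟩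

theorem RepV.smul (n : ℤ) (hx : RepV T v₁ v₂ v₃ s₁ s₂ s₃ k x) :
    RepV T v₁ v₂ v₃ s₁ s₂ s₃ k (n • x) := by
  obtain ⟨a, b, c, rfl, h1, h2, h3⟩ := hx
  exact ⟨n • a, n • b, n • c, by simp only [smul_add, mul_smul_comm], h1.smul n, h2.smul n, h3.smul n⟩

theorem RepV.sum {ι : Type*} (s : Finset ι) (f : ι → LaurentSeries ℤ)
    (h : ∀ i ∈ s, RepV T v₁ v₂ v₃ s₁ s₂ s₃ k (f i)) :
    RepV T v₁ v₂ v₃ s₁ s₂ s₃ k (∑ i ∈ s, f i) := by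
  classical
  induction s using Finset.induction_on with
  | empty => simpa using RepV.zero
  | insert a s ha ih =>
    rw [Finset.sum_insert ha]
    exact (h a (by simp)).add (ih fun i hi => h i (by simp [hi]))

theorem ceil7 (k s m : ℤ) : ⌈((k + 7 * m + s : ℤ) : ℚ) / 7⌉ = ⌈((k + s : ℤ) : ℚ) / 7⌉ + m := by
  rw [← Int.ceil_add_intCast]
  congr 1
  push_cast
  ring

theorem RepV.shift (m : ℤ) (hx : RepV T v₁ v₂ v₃ s₁ s₂ s₃ k x) :
    RepV T v₁ v₂ v₃ s₁ s₂ s₃ (k + 7 * m)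
      (((T ^ m : (LaurentSeries ℤ)ˣ) : LaurentSeries ℤ) * x) := by
  obtain ⟨a, b, c, rfl, h1, h2, h3⟩ := hx
  refine ⟨_, _, _, ?_, by rw [ceil7]; exact h1.shift m, by rw [ceil7]; exact h2.shift m,
    by rw [ceil7]; exact h3.shift m⟩
  ring

theorem RepV.mono {k' : ℤ} (h : k' ≤ k) (hx : RepV T v₁ v₂ v₃ s₁ s₂ s₃ k x) :
    RepV T v₁ v₂ v₃ s₁ s₂ s₃ k' x := by
  obtain ⟨a, b, c, rfl, h1, h2, h3⟩ := hx
  have key : ∀ s : ℤ, ⌈((k' + s : ℤ) : ℚ) / 7⌉ ≤ ⌈((k + s : ℤ) : ℚ) / 7⌉ := by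
    intro s
    apply Int.ceil_le_ceil
    have : ((k' + s : ℤ) : ℚ) ≤ ((k + s : ℤ) : ℚ) := by exact_mod_cast (by omega)
    linarith
  exact ⟨a, b, c, rfl, h1.mono (key _), h2.mono (key _), h3.mono (key _)⟩

end

/-- the substitution `q ↦ q^7` on Laurent series -/
def E7 : LaurentSeries ℤ →+* LaurentSeries ℤ :=
  HahnSeries.embDomainRingHom (AddMonoidHom.mulLeft (7 : ℤ))
    (fun a b h => by simpa using h) (fun a b => by simp)

theorem E7_coeff_mul (f : LaurentSeries ℤ) (n : ℤ) : (E7 f).coeff (7 * n) = f.coeff n := by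
  unfold E7
  exact HahnSeries.embDomain_coeff (f := ⟨⟨(AddMonoidHom.mulLeft (7 : ℤ)), _⟩, _⟩) (a := n)

theorem E7_coeff_not (f : LaurentSeries ℤ) (n : ℤ) (h : ¬ (7 : ℤ) ∣ n) : (E7 f).coeff n = 0 := by
  unfold E7
  refine HahnSeries.embDomain_of_notMem_range ?_
  rintro ⟨m, hm⟩
  exact h ⟨m, hm.symm⟩

theorem U_E7 (U : LaurentSeries ℤ → LaurentSeries ℤ)
    (hU : ∀ (f : LaurentSeries ℤ) (n : ℤ), (U f).coeff n = f.coeff (7 * n))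
    (f g : LaurentSeries ℤ) : U (E7 f * g) = f * U g := by
  ext n
  rw [hU, HahnSeries.coeff_mul, HahnSeries.coeff_mul]
  symm
  refine Finset.sum_nbij (fun p => (7 * p.1, 7 * p.2)) ?_ ?_ ?_ ?_
  · rintro ⟨i, j⟩ h
    simp only [Finset.mem_antidiagonal, HahnSeries.mem_support] at h ⊢
    obtain ⟨h1, h2, h3⟩ := h
    refine ⟨by rwa [E7_coeff_mul], by rwa [← hU], by rw [← h3]; ring⟩
  · rintro ⟨i, j⟩ _ ⟨i', j'⟩ _ h
    simp only [Prod.mk.injEq] at h ⊢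
    omega
  · rintro ⟨i, j⟩ h
    simp only [HahnSeries.mem_support, Set.mem_image, Finset.mem_coe, Finset.mem_antidiagonal] at h ⊢
    obtain ⟨h1, h2, h3⟩ := h
    have : (7 : ℤ) ∣ i := by
      by_contra hc
      exact h1 (E7_coeff_not _ _ hc)
    obtain ⟨m, rfl⟩ := this
    have hj : j = 7 * (n - m) := by omega
    subst hj
    refine ⟨(m, n - m), ⟨by rwa [E7_coeff_mul] at h1, by rwa [hU], by ring⟩, rfl⟩
  · rintro ⟨i, j⟩ h
    simp only
    rw [E7_coeff_mul, hU]

theorem recursion_main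
    (T : (LaurentSeries ℤ)ˣ)
    (c : ℕ → ℕ → ℤ) (c0 : ∀ m, c 0 m = 0)
    (hT : (T : LaurentSeries ℤ) ^ 7 = E7 T + ∑ j ∈ Finset.range 7, ∑ m ∈ Finset.range 7,
      c j m • ((E7 T) ^ (m + 1) * (T : LaurentSeries ℤ) ^ j))
    (U : LaurentSeries ℤ → LaurentSeries ℤ)
    (hU : ∀ (f : LaurentSeries ℤ) (n : ℤ), (U f).coeff n = f.coeff (7 * n))
    (u v₁ v₂ v₃ : LaurentSeries ℤ) (l s₁ s₂ s₃ : ℤ)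
    (h : ∀ k : ℤ, l ≤ k → k ≤ l + 6 → RepV T v₁ v₂ v₃ s₁ s₂ s₃ k (U (u * ↑(T ^ k)))) :
    ∀ k : ℤ, RepV T v₁ v₂ v₃ s₁ s₂ s₃ k (U (u * ↑(T ^ k))) := by
  have hadd : ∀ f g, U (f + g) = U f + U g := by
    intro f g; ext n; simp [hU]
  let Uh : LaurentSeries ℤ →+ LaurentSeries ℤ := AddMonoidHom.mk' U hadd
  have hsum : ∀ (s : Finset ℕ) (f : ℕ → LaurentSeries ℤ), U (∑ i ∈ s, f i) = ∑ i ∈ s, U (f i) :=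
    fun s f => map_sum Uh f s
  have hsmul : ∀ (n : ℤ) f, U (n • f) = n • U f := fun n f => map_zsmul Uh n f
  have hpow : ∀ (n : ℕ) (f g : LaurentSeries ℤ), U ((E7 f) ^ n * g) = f ^ n * U g := by
    intro n f g
    rw [← map_pow, U_E7 U hU]
  have hrec : ∀ k : ℤ, U (u * ↑(T ^ (k + 7))) = (T : LaurentSeries ℤ) * U (u * ↑(T ^ k)) +
      ∑ j ∈ Finset.range 7, ∑ m ∈ Finset.range 7,
        c j m • ((T : LaurentSeries ℤ) ^ (m + 1) * U (u * ↑(T ^ (k + j)))) := by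
    intro k
    have e1 : u * ((T ^ (k + 7) : (LaurentSeries ℤ)ˣ) : LaurentSeries ℤ) =
        E7 T * (u * ↑(T ^ k)) + ∑ j ∈ Finset.range 7, ∑ m ∈ Finset.range 7,
        c j m • ((E7 T) ^ (m + 1) * (u * ↑(T ^ (k + j)))) := by
      have : ((T ^ (k + 7) : (LaurentSeries ℤ)ˣ) : LaurentSeries ℤ) =
        ((T ^ k : (LaurentSeries ℤ)ˣ) : LaurentSeries ℤ) * (T : LaurentSeries ℤ) ^ 7 := by
        rw [zpow_add, Units.val_mul]; rfl
      rw [this, hT, mul_add, mul_add, Finset.mul_sum, Finset.mul_sum]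
      congr 1
      · ring
      · refine Finset.sum_congr rfl fun j _ => ?_
        rw [Finset.mul_sum, Finset.mul_sum]
        refine Finset.sum_congr rfl fun m _ => ?_
        rw [mul_smul_comm, mul_smul_comm, zpow_add, Units.val_mul, zpow_natCast, Units.val_pow_eq_pow_val]
        congr 1
        ring
    rw [e1, hadd, U_E7 U hU, hsum]
    congr 1
    refine Finset.sum_congr rfl fun j _ => ?_
    rw [hsum]
    refine Finset.sum_congr rfl fun m _ => ?_
    rw [hsmul, hpow]
  have up : ∀ n : ℕ, ∀ k, l ≤ k → k ≤ l + 6 + n →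
      RepV T v₁ v₂ v₃ s₁ s₂ s₃ k (U (u * ↑(T ^ k))) := by
    intro n
    induction n with
    | zero => intro k h1 h2; exact h k h1 (by simpa using h2)
    | succ n ih =>
      intro k h1 h2
      by_cases hk : k ≤ l + 6 + n
      · exact ih k h1 hk
      have hk' : k = (k - 7) + 7 := by ring
      rw [hk', hrec]
      push_cast at h2
      refine RepV.add ?_ (RepV.sum _ _ fun j hj => RepV.sum _ _ fun m hm => RepV.smul _ ?_)
      · have := (ih (k - 7) (by omega) (by omega)).shift 1
        rw [zpow_one] at this
        exact this.mono (by omega)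
      · rw [Finset.mem_range] at hj hm
        have := (ih (k - 7 + j) (by omega) (by omega)).shift ((m + 1 : ℕ) : ℤ)
        rw [zpow_natCast, Units.val_pow_eq_pow_val] at this
        exact this.mono (by push_cast; omega)
  have down : ∀ n : ℕ, ∀ k, l - n ≤ k → k ≤ l + 6 →
      RepV T v₁ v₂ v₃ s₁ s₂ s₃ k (U (u * ↑(T ^ k))) := by
    intro n
    induction n with
    | zero => intro k h1 h2; exact h k (by simpa using h1) h2
    | succ n ih =>
      intro k h1 h2
      by_cases hk : l - n ≤ k
      · exact ih k hk h2
      push_cast at h1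
      have e : U (u * ↑(T ^ k)) = ((T ^ (-1 : ℤ) : (LaurentSeries ℤ)ˣ) : LaurentSeries ℤ) *
          (U (u * ↑(T ^ (k + 7))) + (-1 : ℤ) • ∑ j ∈ Finset.range 7, ∑ m ∈ Finset.range 7,
        c j m • ((T : LaurentSeries ℤ) ^ (m + 1) * U (u * ↑(T ^ (k + j))))) := by
        rw [hrec]
        simp
      rw [e]
      have : RepV T v₁ v₂ v₃ s₁ s₂ s₃ (k + 7) (U (u * ↑(T ^ (k + 7))) + (-1 : ℤ) • ∑ j ∈ Finset.range 7, ∑ m ∈ Finset.range 7,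
        c j m • ((T : LaurentSeries ℤ) ^ (m + 1) * U (u * ↑(T ^ (k + j))))) := by
        refine RepV.add (ih _ (by omega) (by omega)) (RepV.smul _ (RepV.sum _ _ fun j hj => RepV.sum _ _ fun m hm => ?_))
        rw [Finset.mem_range] at hj hm
        rcases Nat.eq_zero_or_pos j with rfl | hj0
        · rw [c0, zero_smul]; exact RepV.zero
        · refine RepV.smul _ ?_
          have := (ih (k + j) (by omega) (by omega)).shift ((m + 1 : ℕ) : ℤ)
          rw [zpow_natCast, Units.val_pow_eq_pow_val] at this
          exact this.mono (by push_cast; omega)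
      exact (this.shift (-1)).mono (by omega)
  intro k
  rcases le_total l k with hk | hk
  · exact up (k - l).toNat k hk (by omega)
  · exact down (l - k).toNat k (by omega) (by omega)

/-- triangular numbers `n(n-1)/2` -/
def tri : ℕ → ℕ
  | 0 => 0
  | n + 1 => tri n + n

theorem tri_succ (n : ℕ) : tri (n + 1) = tri n + n := rfl

theorem two_tri (n : ℕ) : 2 * tri n + n = n * n := by
  induction n with
  | zero => rfl
  | succ n ih => simp only [tri]; nlinarith

/-- partial products -/
def PP (b N : ℕ) : PowerSeries ℤ :=
  ∏ k ∈ Finset.range N, (1 - (PowerSeries.X : PowerSeries ℤ) ^ (b * (k + 1)))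

theorem PP_succ (b N : ℕ) : PP b (N + 1) = PP b N * (1 - PowerSeries.X ^ (b * (N + 1))) := by
  simp [PP, Finset.prod_range_succ]

theorem PP_zero (b : ℕ) : PP b 0 = 1 := by simp [PP]

theorem coeff_PP (b : ℕ) (hb : 0 < b) (n N : ℕ) (h : n ≤ N) :
    PowerSeries.coeff n (PP b N) = PowerSeries.coeff n (J b) := by
  have step : ∀ M, n ≤ M → PowerSeries.coeff n (PP b (M + 1)) = PowerSeries.coeff n (PP b M) := by
    intro M hM
    rw [PP_succ, mul_sub, mul_one, map_sub, PowerSeries.coeff_mul_X_pow', if_neg, sub_zero]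
    nlinarith
  have all : ∀ d, PowerSeries.coeff n (PP b (n + d)) = PowerSeries.coeff n (PP b n) := by
    intro d
    induction d with
    | zero => rfl
    | succ d ih => rw [← add_assoc, step _ (by omega), ih]
  obtain ⟨d, rfl⟩ := Nat.exists_eq_add_of_le h
  rw [all]
  have := all 1
  rw [← this]
  simp [J, PP]

/-- reduction modulo `X^N` -/
def phi (N : ℕ) : PowerSeries ℤ →+* PowerSeries ℤ ⧸ Ideal.span {(PowerSeries.X : PowerSeries ℤ) ^ N} :=
  Ideal.Quotient.mk _

theorem phi_eq_iff (N : ℕ) (f g : PowerSeries ℤ) :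
    phi N f = phi N g ↔ ∀ n < N, PowerSeries.coeff n f = PowerSeries.coeff n g := by
  unfold phi
  rw [Ideal.Quotient.eq, Ideal.mem_span_singleton, PowerSeries.X_pow_dvd_iff]
  simp [sub_eq_zero]

theorem eq_of_phi (f g : PowerSeries ℤ) (h : ∀ N, phi N f = phi N g) : f = g := by
  ext n
  exact (phi_eq_iff _ _ _).1 (h (n + 1)) n (by omega)

theorem phi_PP (b : ℕ) (hb : 0 < b) (M N : ℕ) (h : M ≤ N) : phi M (PP b N) = phi M (J b) := by
  rw [phi_eq_iff]
  intro n hn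
  exact coeff_PP b hb n N (by omega)

theorem constantCoeff_PP (b : ℕ) (hb : 0 < b) (N : ℕ) : PowerSeries.constantCoeff (PP b N) = 1 := by
  induction N with
  | zero => simp [PP]
  | succ N ih =>
    rw [PP_succ, map_mul, ih]
    have : b * (N + 1) ≠ 0 := by positivity
    simp [this]

theorem constantCoeff_J (b : ℕ) (hb : 0 < b) : PowerSeries.constantCoeff (J b) = 1 := by
  rw [← PowerSeries.coeff_zero_eq_constantCoeff_apply, ← coeff_PP b hb 0 0 le_rfl]
  simp [PP]

theorem PP_ne (b : ℕ) (hb : 0 < b) (N : ℕ) : PP b N ≠ 0 := by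
  intro h
  have := constantCoeff_PP b hb N
  rw [h] at this; simp at this

theorem J_isUnit (b : ℕ) (hb : 0 < b) : IsUnit (J b) := by
  rw [PowerSeries.isUnit_iff_constantCoeff, constantCoeff_J b hb]
  exact isUnit_one

/-- Gaussian binomials -/
def gb : ℕ → ℕ → PowerSeries ℤ
  | _, 0 => 1
  | 0, _ + 1 => 0
  | N + 1, j + 1 => gb N (j + 1) + PowerSeries.X ^ (N - j) * gb N j

theorem gb_zero_right (N : ℕ) : gb N 0 = 1 := by cases N <;> rfl

theorem gb_succ (N j : ℕ) : gb (N + 1) (j + 1) = gb N (j + 1) + PowerSeries.X ^ (N - j) * gb N j := rfl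

theorem gb_gt (N : ℕ) : ∀ j, N < j → gb N j = 0 := by
  induction N with
  | zero => intro j hj; cases j with
    | zero => omega
    | succ j => rfl
  | succ N ih => intro j hj; cases j with
    | zero => omega
    | succ j => rw [gb_succ, ih _ (by omega), ih _ (by omega)]; simp

theorem gb_PP (N : ℕ) : ∀ j, j ≤ N → gb N j * (PP 1 j * PP 1 (N - j)) = PP 1 N := by
  induction N with
  | zero => intro j hj; obtain rfl : j = 0 := by omega
            simp [gb, PP]
  | succ N ih =>
    intro j hj
    cases j with
    | zero => simp [gb_zero_right, PP_zero]
    | succ j =>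
      rw [gb_succ, Nat.add_sub_add_right]
      rcases Nat.lt_or_ge j N with h | h
      · obtain ⟨m, rfl⟩ : ∃ m, N = j + 1 + m := ⟨N - (j + 1), by omega⟩
        have h1 := ih j (by omega)
        have h2 := ih (j + 1) (by omega)
        have e1 : j + 1 + m - j = m + 1 := by omega
        have e2 : j + 1 + m - (j + 1) = m := by omega
        rw [e1] at h1 ⊢
        rw [e2] at h2
        rw [PP_succ 1 (j + 1 + m)]
        have h3 := PP_succ 1 m
        have h4 := PP_succ 1 j
        simp only [one_mul] at h3 h4 ⊢
        have e3 : (PowerSeries.X : PowerSeries ℤ) ^ (j + 1 + m + 1) = PowerSeries.X ^ (j + 1) * PowerSeries.X ^ (m + 1) := by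
          rw [← pow_add]; congr 1
        rw [e3]
        linear_combination (1 - PowerSeries.X ^ (m + 1)) * h2 + gb (j + 1 + m) (j + 1) * PP 1 (j + 1) * h3
          + PowerSeries.X ^ (m + 1) * (1 - PowerSeries.X ^ (j + 1)) * h1
          + PowerSeries.X ^ (m + 1) * gb (j + 1 + m) j * PP 1 (m + 1) * h4
      · obtain rfl : j = N := by omega
        have h1 := ih j le_rfl
        rw [gb_gt _ _ (Nat.lt_succ_self j)]
        simp only [Nat.sub_self, PP_zero, mul_one, pow_zero, one_mul, zero_add] at h1 ⊢
        rw [PP_succ]; linear_combination (1 - PowerSeries.X ^ (1 * (j + 1))) * h1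

theorem gb_symm (n i : ℕ) (hi : i ≤ n) : gb (n + 1 + n) (n - i) = gb (n + 1 + n) (n + 1 + i) := by
  have h1 := gb_PP (n + 1 + n) (n - i) (by omega)
  have h2 := gb_PP (n + 1 + n) (n + 1 + i) (by omega)
  have e1 : n + 1 + n - (n - i) = n + 1 + i := by omega
  have e2 : n + 1 + n - (n + 1 + i) = n - i := by omega
  rw [e1] at h1
  rw [e2, mul_comm (PP 1 (n + 1 + i))] at h2
  exact mul_right_cancel₀ (mul_ne_zero (PP_ne 1 one_pos _) (PP_ne 1 one_pos _)) (h1.trans h2.symm)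

/-- coefficients in the q-binomial theorem -/
def cc (N j : ℕ) : PowerSeries ℤ := (-1) ^ j * PowerSeries.X ^ (tri j) * gb N j

theorem qbinom (N : ℕ) :
    ∏ k ∈ Finset.range N, (Polynomial.X - Polynomial.C ((PowerSeries.X : PowerSeries ℤ) ^ k)) =
    ∑ j ∈ Finset.range (N + 1), Polynomial.C (cc N j) * Polynomial.X ^ (N - j) := by
  induction N with
  | zero => simp [cc, tri, gb]
  | succ N ih =>
    rw [Finset.prod_range_succ, ih, Finset.sum_range_succ' _ (N + 1)]
    have h0 : ∀ M, cc M 0 = 1 := by intro M; simp [cc, tri, gb_zero_right]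
    have hc : ∀ j ∈ Finset.range (N + 1), Polynomial.C (cc (N + 1) (j + 1)) * Polynomial.X ^ (N + 1 - (j + 1))
        = Polynomial.C (cc N (j + 1)) * Polynomial.X ^ (N - j) -
          Polynomial.C ((PowerSeries.X : PowerSeries ℤ) ^ N) * (Polynomial.C (cc N j) * Polynomial.X ^ (N - j)) := by
      intro j hj
      rw [Finset.mem_range] at hj
      rw [Nat.add_sub_add_right, ← mul_assoc, ← Polynomial.C_mul, ← sub_mul, ← Polynomial.C_sub]
      congr 2
      simp only [cc, gb_succ, tri]
      obtain ⟨d, rfl⟩ : ∃ d, N = j + d := ⟨N - j, by omega⟩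
      rw [Nat.add_sub_cancel_left]
      ring
    rw [Finset.sum_congr rfl hc, Finset.sum_sub_distrib, ← Finset.mul_sum, mul_sub]
    have hY : (∑ j ∈ Finset.range (N + 1), Polynomial.C (cc N j) * Polynomial.X ^ (N - j)) * Polynomial.X
        = ∑ j ∈ Finset.range (N + 1), Polynomial.C (cc N (j + 1)) * Polynomial.X ^ (N - j) +
          Polynomial.C (cc (N + 1) 0) * Polynomial.X ^ (N + 1 - 0) := by
      rw [Finset.sum_range_succ', Finset.sum_range_succ]
      have hz : cc N (N + 1) = 0 := by simp [cc, gb_gt N (N + 1) (by omega)]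
      rw [hz, h0, h0, add_mul, Finset.sum_mul]
      simp only [map_zero, zero_mul, add_zero]
      refine congrArg₂ (· + ·) ?_ ?_
      · refine Finset.sum_congr rfl fun j hj => ?_
        rw [Finset.mem_range] at hj
        obtain ⟨d, rfl⟩ : ∃ d, N = j + 1 + d := ⟨N - (j + 1), by omega⟩
        have e1 : j + 1 + d - (j + 1) = d := by omega
        have e2 : j + 1 + d - j = d + 1 := by omega
        rw [e1, e2]; ring
      · rw [Nat.sub_zero, Nat.sub_zero, pow_succ, mul_assoc]
    rw [hY, mul_comm _ (Polynomial.C _)]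
    abel

theorem prodA (n : ℕ) : ∏ k ∈ Finset.range n, ((PowerSeries.X : PowerSeries ℤ) ^ n - PowerSeries.X ^ k)
    = (-1) ^ n * PowerSeries.X ^ (tri n) * PP 1 n := by
  have h1 : ∏ k ∈ Finset.range n, ((PowerSeries.X : PowerSeries ℤ) ^ n - PowerSeries.X ^ k) =
      ∏ k ∈ Finset.range n, (-1 * PowerSeries.X ^ k * (1 - PowerSeries.X ^ (n - 1 - k + 1))) := by
    refine Finset.prod_congr rfl fun k hk => ?_
    rw [Finset.mem_range] at hk
    obtain ⟨d, rfl⟩ : ∃ d, n = k + 1 + d := ⟨n - (k + 1), by omega⟩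
    have : k + 1 + d - 1 - k + 1 = d + 1 := by omega
    rw [this]; ring
  rw [h1, Finset.prod_mul_distrib, Finset.prod_mul_distrib, Finset.prod_const, Finset.card_range,
    Finset.prod_range_reflect (fun k => (1 - (PowerSeries.X : PowerSeries ℤ) ^ (k + 1))) n]
  congr 2
  · induction n with
    | zero => simp [tri]
    | succ n ih =>
      rw [Finset.prod_range_succ, tri, pow_add]
      congr 1
      apply ih
      refine Finset.prod_congr rfl fun k hk => ?_
      rw [Finset.mem_range] at hk
      obtain ⟨d, rfl⟩ : ∃ d, n = k + 1 + d := ⟨n - (k + 1), by omega⟩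
      have : k + 1 + d - 1 - k + 1 = d + 1 := by omega
      rw [this]; ring
  · simp

theorem prodB (n : ℕ) : ∏ k ∈ Finset.range n, ((PowerSeries.X : PowerSeries ℤ) ^ n - PowerSeries.X ^ (n + 1 + k))
    = PowerSeries.X ^ (n * n) * PP 1 n := by
  have : ∀ k, (PowerSeries.X : PowerSeries ℤ) ^ n - PowerSeries.X ^ (n + 1 + k) =
      PowerSeries.X ^ n * (1 - PowerSeries.X ^ (1 * (k + 1))) := by
    intro k; ring
  simp only [this]
  rw [Finset.prod_mul_distrib, Finset.prod_const, Finset.card_range, ← pow_mul]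
  rfl

theorem jac_deriv (n : ℕ) :
    ∑ j ∈ Finset.range (n + 1 + n + 1), cc (n + 1 + n) j * ((n + 1 + n - j : ℕ) : PowerSeries ℤ) *
      (PowerSeries.X ^ n) ^ (n + 1 + n - j) =
    PowerSeries.X ^ n * ((-1) ^ n * PowerSeries.X ^ (tri n) * PP 1 n * (PowerSeries.X ^ (n * n) * PP 1 n)) := by
  have h := qbinom (n + 1 + n)
  rw [Finset.prod_range_add, Finset.prod_range_succ] at h
  have hd := congrArg (fun p => PowerSeries.X ^ n * (Polynomial.derivative p).eval ((PowerSeries.X : PowerSeries ℤ) ^ n)) h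
  simp only [Polynomial.derivative_mul, Polynomial.derivative_sum, Polynomial.eval_add, Polynomial.eval_mul,
    Polynomial.eval_finsetSum, Polynomial.eval_sub, Polynomial.eval_X, Polynomial.eval_C, sub_self,
    Polynomial.derivative_X_pow, Polynomial.derivative_sub, Polynomial.derivative_X, Polynomial.derivative_C,
    Polynomial.eval_prod, prodA, prodB, Polynomial.eval_pow,
    Finset.mul_sum, mul_zero, zero_mul, zero_add, add_zero, sub_zero, mul_one] at hd
  rw [hd]
  refine Finset.sum_congr rfl fun j hj => ?_
  rcases Nat.eq_zero_or_pos (n + 1 + n - j) with h0 | h0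
  · rw [h0]; simp
  · obtain ⟨d, hd'⟩ : ∃ d, n + 1 + n - j = d + 1 := ⟨n + 1 + n - j - 1, by omega⟩
    rw [hd', Nat.add_sub_cancel]
    ring

theorem jac_zero (n : ℕ) :
    ∑ j ∈ Finset.range (n + 1 + n + 1), cc (n + 1 + n) j * 
      (PowerSeries.X ^ n) ^ (n + 1 + n - j) = 0 := by
  have h := qbinom (n + 1 + n)
  rw [Finset.prod_range_add, Finset.prod_range_succ] at h
  have hd := congrArg (fun p => p.eval ((PowerSeries.X : PowerSeries ℤ) ^ n)) h
  simp only [Polynomial.eval_mul,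
    Polynomial.eval_finsetSum, Polynomial.eval_sub, Polynomial.eval_X, Polynomial.eval_C, sub_self,
    Polynomial.eval_pow, mul_zero, zero_mul] at hd
  exact hd.symm

theorem jac_finite (n : ℕ) :
    ∑ i ∈ Finset.range (n + 1), (-1) ^ i * (2 * (i : PowerSeries ℤ) + 1) * PowerSeries.X ^ (tri (i + 1)) *
      gb (n + 1 + n) (n - i) = PP 1 n ^ 2 := by
  have h1 := jac_deriv n
  have h0 := jac_zero n
  have h2 : ∑ j ∈ Finset.range (n + 1 + (n + 1)), cc (n + 1 + n) j *
      (2 * ((n + 1 + n - j : ℕ) : PowerSeries ℤ) - ((n + 1 + n : ℕ) : PowerSeries ℤ)) * (PowerSeries.X ^ n) ^ (n + 1 + n - j) =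
      2 * (PowerSeries.X ^ n * ((-1) ^ n * PowerSeries.X ^ (tri n) * PP 1 n * (PowerSeries.X ^ (n * n) * PP 1 n))) := by
    rw [← h1, ← sub_zero (2 * _), ← mul_zero ((n + 1 + n : ℕ) : PowerSeries ℤ), ← h0, Finset.mul_sum, Finset.mul_sum,
      ← Finset.sum_sub_distrib]
    refine Finset.sum_congr rfl fun j hj => ?_
    ring
  rw [Finset.sum_range_add, ← Finset.sum_range_reflect, ← Finset.sum_add_distrib] at h2
  have h3 : ∀ i ∈ Finset.range (n + 1), cc (n + 1 + n) (n + 1 - 1 - i) *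
      (2 * ((n + 1 + n - (n + 1 - 1 - i) : ℕ) : PowerSeries ℤ) - ((n + 1 + n : ℕ) : PowerSeries ℤ)) *
        (PowerSeries.X ^ n) ^ (n + 1 + n - (n + 1 - 1 - i)) +
      cc (n + 1 + n) (n + 1 + i) *
      (2 * ((n + 1 + n - (n + 1 + i) : ℕ) : PowerSeries ℤ) - ((n + 1 + n : ℕ) : PowerSeries ℤ)) *
        (PowerSeries.X ^ n) ^ (n + 1 + n - (n + 1 + i)) =
      (2 * ((-1) ^ n * PowerSeries.X ^ (n + tri n + n * n))) *
      ((-1) ^ i * (2 * (i : PowerSeries ℤ) + 1) * PowerSeries.X ^ (tri (i + 1)) *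
      gb (n + 1 + n) (n - i)) := by
    intro i hi
    rw [Finset.mem_range] at hi
    have e0 : n + 1 - 1 - i = n - i := by omega
    have e1 : n + 1 + n - (n - i) = n + 1 + i := by omega
    have e2 : n + 1 + n - (n + 1 + i) = n - i := by omega
    rw [e0, e1, e2]
    unfold cc
    rw [← gb_symm n i (by omega)]
    generalize gb (n + 1 + n) (n - i) = g
    obtain ⟨d, rfl⟩ : ∃ d, n = i + d := ⟨n - i, by omega⟩
    rw [Nat.add_sub_cancel_left]
    have x1 : tri d + (i + d) * (i + d + 1 + i) = (i + d + tri (i + d) + (i + d) * (i + d)) + tri (i + 1) := by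
      have a1 := two_tri d
      have a2 := two_tri (i + d)
      have a3 := two_tri (i + 1)
      nlinarith
    have x2 : tri (i + d + 1 + i) + (i + d) * d = (i + d + tri (i + d) + (i + d) * (i + d)) + tri (i + 1) := by
      have a1 := two_tri (i + d + 1 + i)
      have a2 := two_tri (i + d)
      have a3 := two_tri (i + 1)
      nlinarith
    have s1 : ((-1 : PowerSeries ℤ)) ^ (i + d) * (-1) ^ i = (-1) ^ d := by
      rw [← pow_add, show i + d + i = d + 2 * i by ring, pow_add, pow_mul]; simp
    have s2 : ((-1 : PowerSeries ℤ)) ^ (i + d + 1 + i) = - (-1) ^ d := by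
      rw [show i + d + 1 + i = d + 1 + 2 * i by ring, pow_add, pow_mul, pow_succ]; simp
    rw [s2]
    push_cast
    have y1 := congrArg (fun e => (PowerSeries.X : PowerSeries ℤ) ^ e) x1
    have y2 := congrArg (fun e => (PowerSeries.X : PowerSeries ℤ) ^ e) x2
    simp only [pow_add _ _ (tri (i + 1)), pow_add _ (tri d), pow_add _ (tri (i + d + 1 + i)), pow_mul] at y1 y2
    have s1' := s1
    rw [← s1]
    generalize (PowerSeries.X : PowerSeries ℤ) ^ (tri (i + 1)) = t1 at *
    generalize (PowerSeries.X : PowerSeries ℤ) ^ (tri d) = t2 at *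
    generalize (PowerSeries.X : PowerSeries ℤ) ^ (tri (i + d + 1 + i)) = t3 at *
    generalize (PowerSeries.X : PowerSeries ℤ) ^ (i + d + tri (i + d) + (i + d) * (i + d)) = t4 at *
    generalize ((PowerSeries.X : PowerSeries ℤ) ^ (i + d)) ^ (i + d + 1 + i) = t5 at *
    generalize ((PowerSeries.X : PowerSeries ℤ) ^ (i + d)) ^ d = t6 at *
    generalize ((-1 : PowerSeries ℤ)) ^ (i + d) = e1 at *
    generalize ((-1 : PowerSeries ℤ)) ^ i = e2 at *
    linear_combination (e1 * e2 * g * (2 * (i : PowerSeries ℤ) + 1)) * y1 + (e1 * e2 * g * (2 * (i : PowerSeries ℤ) + 1)) * y2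
  rw [Finset.sum_congr rfl h3, ← Finset.mul_sum] at h2
  have hne : (2 * ((-1) ^ n * (PowerSeries.X : PowerSeries ℤ) ^ (n + tri n + n * n))) ≠ 0 := by
    have h20 : (2 : PowerSeries ℤ) ≠ 0 := by
      intro h
      have h' := congrArg PowerSeries.constantCoeff h
      rw [map_ofNat, map_zero] at h'
      norm_num at h'
    refine mul_ne_zero h20 (mul_ne_zero (pow_ne_zero _ (by simp)) (pow_ne_zero _ PowerSeries.X_ne_zero))
  apply mul_left_cancel₀ hne
  rw [h2, pow_add, pow_add]
  ring

theorem jac_phi (M : ℕ) : phi M (∑ i ∈ Finset.range (2 * M + 1), (-1) ^ i * (2 * (i : PowerSeries ℤ) + 1) *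
    PowerSeries.X ^ (tri (i + 1))) = phi M (J 1 ^ 3) := by
  have h := congrArg (fun f => phi M (f * J 1)) (jac_finite (2 * M))
  simp only [Finset.sum_mul] at h
  rw [map_mul, map_pow, phi_PP 1 one_pos M (2 * M) (by omega), ← map_pow, ← map_mul, ← pow_succ] at h
  rw [← h, map_sum, map_sum]
  refine Finset.sum_congr rfl fun i hi => ?_
  rw [Finset.mem_range] at hi
  rcases Nat.lt_or_ge M i with hM | hM
  · have : phi M (PowerSeries.X ^ (tri (i + 1))) = 0 := by
      rw [← map_zero (phi M), phi_eq_iff]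
      intro n hn
      rw [PowerSeries.coeff_X_pow, if_neg]
      · simp
      · have := tri_succ i
        omega
    simp only [map_mul, this, mul_zero, zero_mul]
  · have h1 := congrArg (phi M) (gb_PP (2 * M + 1 + 2 * M) (2 * M - i) (by omega))
    rw [map_mul, map_mul, phi_PP 1 one_pos M _ (by omega), phi_PP 1 one_pos M _ (by omega),
      phi_PP 1 one_pos M _ (by omega), ← mul_assoc] at h1
    have hu : IsUnit (phi M (J 1)) := (J_isUnit 1 one_pos).map _
    have h2 : phi M (gb (2 * M + 1 + 2 * M) (2 * M - i)) * phi M (J 1) = 1 := by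
      apply hu.mul_right_cancel
      rw [h1, one_mul]
    rw [map_mul _ _ (J 1), map_mul _ _ (gb _ _), mul_assoc _ (phi M (gb _ _)), h2, mul_one]

theorem tri_inj {i j : ℕ} (h : tri (i + 1) = tri (j + 1)) : i = j := by
  have h1 := two_tri (i + 1)
  have h2 := two_tri (j + 1)
  nlinarith

theorem coeff_J3_tri (i : ℕ) : PowerSeries.coeff (tri (i + 1)) (J 1 ^ 3) = (-1) ^ i * (2 * (i : ℤ) + 1) := by
  have h := (phi_eq_iff _ _ _).1 (jac_phi (tri (i + 1) + 1)) (tri (i + 1)) (by omega)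
  rw [← h, map_sum, Finset.sum_eq_single i]
  · have e : ((-1) ^ i * (2 * (i : PowerSeries ℤ) + 1)) = PowerSeries.C ((-1) ^ i * (2 * (i : ℤ) + 1)) := by simp
    rw [e, PowerSeries.coeff_C_mul, PowerSeries.coeff_X_pow, if_pos rfl, mul_one]
  · intro j hj hji
    have : tri (i + 1) ≠ tri (j + 1) := fun h => hji (tri_inj h).symm
    have e : ((-1) ^ j * (2 * (j : PowerSeries ℤ) + 1)) = PowerSeries.C ((-1) ^ j * (2 * (j : ℤ) + 1)) := by simp
    rw [e, PowerSeries.coeff_C_mul, PowerSeries.coeff_X_pow, if_neg this, mul_zero]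
  · intro hi
    exfalso
    apply hi
    rw [Finset.mem_range]
    have := tri_succ i
    omega

theorem coeff_J3_zero (n : ℕ) (hn : ∀ i, n ≠ tri (i + 1)) : PowerSeries.coeff n (J 1 ^ 3) = 0 := by
  have h := (phi_eq_iff _ _ _).1 (jac_phi (n + 1)) n (by omega)
  rw [← h, map_sum]
  refine Finset.sum_eq_zero fun j _ => ?_
  have e : ((-1) ^ j * (2 * (j : PowerSeries ℤ) + 1)) = PowerSeries.C ((-1) ^ j * (2 * (j : ℤ) + 1)) := by simp
  rw [e, PowerSeries.coeff_C_mul, PowerSeries.coeff_X_pow, if_neg (hn j), mul_zero]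

theorem J_one_eq : J 1 = PowerSeries.pentagonalSeries ℤ := by
  ext n
  have h := PowerSeries.coeff_prod_one_sub_X_pow_eventually_eq ℤ n
  rw [Filter.eventually_atTop] at h
  obtain ⟨s, hs⟩ := h
  obtain ⟨M, hM⟩ := s.exists_nat_subset_range
  have h2 := hs (Finset.range (max M n)) (hM.trans (Finset.range_mono (le_max_left _ _)))
  rw [← h2, ← coeff_PP 1 one_pos n (max M n) (le_max_right _ _)]
  simp [PP]

theorem J_expand (b : ℕ) (hb : b ≠ 0) : J b = PowerSeries.expand b hb (J 1) := by
  have h1 : ∀ N, PowerSeries.expand b hb (PP 1 N) = PP b N := by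
    intro N
    simp [PP, map_prod, ← pow_mul]
  ext n
  rw [← coeff_PP b (Nat.pos_of_ne_zero hb) n n le_rfl, ← h1, PowerSeries.coeff_expand, PowerSeries.coeff_expand]
  split_ifs with h
  · exact coeff_PP 1 one_pos _ _ (Nat.div_le_self _ _)
  · rfl

/-- supported on exponents in a residue class mod 7 -/
def Res (r : ZMod 7) (f : PowerSeries ℤ) : Prop := ∀ n : ℕ, (n : ZMod 7) ≠ r → PowerSeries.coeff n f = 0

theorem Res.mul {r s : ZMod 7} {f g : PowerSeries ℤ} (hf : Res r f) (hg : Res s g) : Res (r + s) (f * g) := by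
  intro n hn
  rw [PowerSeries.coeff_mul]
  refine Finset.sum_eq_zero fun p hp => ?_
  rw [Finset.HasAntidiagonal.mem_antidiagonal] at hp
  by_cases h1 : (p.1 : ZMod 7) = r
  · by_cases h2 : (p.2 : ZMod 7) = s
    · exfalso; apply hn; rw [← hp, Nat.cast_add, h1, h2]
    · rw [hg _ h2, mul_zero]
  · rw [hf _ h1, zero_mul]

theorem Res.congr {r s : ZMod 7} {f : PowerSeries ℤ} (hf : Res r f) (h : r = s) : Res s f := h ▸ hf

theorem Res.add {r : ZMod 7} {f g : PowerSeries ℤ} (hf : Res r f) (hg : Res r g) : Res r (f + g) := by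
  intro n hn
  rw [map_add, hf n hn, hg n hn, add_zero]

theorem Res.cmul {r : ZMod 7} {f : PowerSeries ℤ} (c : ℤ) (hf : Res r f) : Res r (PowerSeries.C c * f) := by
  intro n hn
  rw [PowerSeries.coeff_C_mul, hf n hn, mul_zero]

/-- residue part of `J 1` -/
def fp (r : ZMod 7) : PowerSeries ℤ :=
  PowerSeries.mk fun n => if (n : ZMod 7) = r then PowerSeries.coeff n (J 1) else 0

theorem Res_fp (r : ZMod 7) : Res r (fp r) := by
  intro n hn
  simp [fp, hn]

theorem pent_mod (k : ℤ) : (pentagonal k : ZMod 7) = 4 * ((k : ZMod 7) * (3 * k - 1)) := by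
  have h := congrArg (fun x : ℤ => (x : ZMod 7)) (two_mul_natCast_pentagonal k)
  push_cast at h
  rw [← h, ← mul_assoc, show (4 : ZMod 7) * 2 = 1 by decide, one_mul]

theorem zmod_aux1 : ∀ k : ZMod 7, 4 * (k * (3 * k - 1)) ≠ 3 ∧ 4 * (k * (3 * k - 1)) ≠ 4 ∧ 4 * (k * (3 * k - 1)) ≠ 6 := by decide

theorem zmod_aux2 : ∀ k : ZMod 7, 4 * (k * (3 * k - 1)) = 2 → k + 1 = 0 := by decide

theorem zmod_aux3 : ∀ x : ZMod 7, x = 0 ∨ x = 1 ∨ x = 2 ∨ x = 3 ∨ x = 4 ∨ x = 5 ∨ x = 6 := by decide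

theorem J_decomp : J 1 = fp 0 + fp 1 + fp 2 + fp 5 := by
  ext n
  have key : (n : ZMod 7) = 3 ∨ (n : ZMod 7) = 4 ∨ (n : ZMod 7) = 6 → PowerSeries.coeff n (J 1) = 0 := by
    intro h
    rw [J_one_eq]
    apply PowerSeries.coeff_pentagonalSeries_eq_zero
    rintro ⟨k, rfl⟩
    rw [pent_mod] at h
    have := zmod_aux1 k
    tauto
  simp only [map_add, fp, PowerSeries.coeff_mk]
  rcases zmod_aux3 (n : ZMod 7) with h | h | h | h | h | h | h
  · rw [h]; simp [show (0 : ZMod 7) ≠ 1 by decide, show (0 : ZMod 7) ≠ 2 by decide, show (0 : ZMod 7) ≠ 5 by decide]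
  · rw [h]; simp [show (1 : ZMod 7) ≠ 0 by decide, show (1 : ZMod 7) ≠ 2 by decide, show (1 : ZMod 7) ≠ 5 by decide]
  · rw [h]; simp [show (2 : ZMod 7) ≠ 0 by decide, show (2 : ZMod 7) ≠ 1 by decide, show (2 : ZMod 7) ≠ 5 by decide]
  · rw [key (by tauto)]; simp
  · rw [key (by tauto)]; simp
  · rw [h]; simp [show (5 : ZMod 7) ≠ 0 by decide, show (5 : ZMod 7) ≠ 1 by decide, show (5 : ZMod 7) ≠ 2 by decide]
  · rw [key (by tauto)]; simp

theorem pent_49 (m : ℤ) : pentagonal (7 * m - 1) = 49 * pentagonal m + 2 := by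
  have h1 := two_mul_natCast_pentagonal (7 * m - 1)
  have h2 := two_mul_natCast_pentagonal m
  have : ((pentagonal (7 * m - 1) : ℕ) : ℤ) = ((49 * pentagonal m + 2 : ℕ) : ℤ) := by
    push_cast
    linarith
  exact_mod_cast this

theorem coeff_X_expand (a n : ℕ) (g : PowerSeries ℤ) :
    PowerSeries.coeff (49 * n + a) (PowerSeries.X ^ a * PowerSeries.expand 49 (by norm_num) g) = PowerSeries.coeff n g := by
  rw [PowerSeries.coeff_X_pow_mul, PowerSeries.coeff_expand_mul]

theorem coeff_X_expand0 (a n : ℕ) (g : PowerSeries ℤ) (h : ∀ k, n = 49 * k + a → PowerSeries.coeff k g = 0) :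
    PowerSeries.coeff n (PowerSeries.X ^ a * PowerSeries.expand 49 (by norm_num) g) = 0 := by
  rw [PowerSeries.coeff_X_pow_mul']
  split_ifs with h1
  · rw [PowerSeries.coeff_expand]
    split_ifs with h2
    · apply h; omega
    · rfl
  · rfl

theorem fp2 : fp 2 = - (PowerSeries.X ^ 2 * J 49) := by
  rw [J_expand 49 (by norm_num)]
  ext n
  rw [map_neg]
  simp only [fp, PowerSeries.coeff_mk]
  rw [J_one_eq]
  by_cases hp : ∃ m, n = 49 * pentagonal m + 2
  · obtain ⟨m, rfl⟩ := hp
    rw [coeff_X_expand, if_pos, ← pent_49, PowerSeries.coeff_pentagonalSeries_pentagonal,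
      PowerSeries.coeff_pentagonalSeries_pentagonal]
    · simp only [Int.cast_id]
      rw [Int.negOnePow_sub, Int.negOnePow_one, show 7 * m = m + 2 * (3 * m) by ring, Int.negOnePow_add,
        Int.negOnePow_two_mul]
      simp
    · push_cast
      rw [show (49 : ZMod 7) = 0 by decide]; simp
  · rw [coeff_X_expand0, neg_zero]
    · rw [ite_eq_right_iff]
      intro h2
      apply PowerSeries.coeff_pentagonalSeries_eq_zero
      rintro ⟨k, rfl⟩
      rw [pent_mod] at h2
      have h3 := zmod_aux2 _ h2
      have h4 : (((k + 1 : ℤ)) : ZMod 7) = 0 := by push_cast; exact h3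
      rw [ZMod.intCast_zmod_eq_zero_iff_dvd] at h4
      obtain ⟨m, hm⟩ := h4
      apply hp
      refine ⟨m, ?_⟩
      rw [← pent_49]
      congr 1
      push_cast at hm
      linarith
    · intro k hk
      apply PowerSeries.coeff_pentagonalSeries_eq_zero
      rintro ⟨m, rfl⟩
      exact hp ⟨m, hk⟩

theorem tri_49 (m : ℕ) : tri (7 * m + 3 + 1) = 49 * tri (m + 1) + 6 := by
  have h1 := two_tri (7 * m + 3 + 1)
  have h2 := two_tri (m + 1)
  nlinarith

theorem tri_mod (i : ℕ) : (tri (i + 1) : ZMod 7) = 4 * ((i : ZMod 7) * (i + 1)) := by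
  have h := congrArg (fun x : ℕ => (x : ZMod 7)) (two_tri (i + 1))
  push_cast at h
  have h8 : (8 : ZMod 7) = 1 := by decide
  linear_combination 4 * h - h8 * (tri (i + 1) : ZMod 7)

theorem zmod_aux4 : ∀ k : ZMod 7, 4 * (k * (k + 1)) ≠ 2 := by decide

theorem zmod_aux5 : ∀ k : ZMod 7, 4 * (k * (k + 1)) = 6 → k = 3 := by decide

theorem J3_res2 (n : ℕ) (h : (n : ZMod 7) = 2) : PowerSeries.coeff n (J 1 ^ 3) = 0 := by
  apply coeff_J3_zero
  rintro i rfl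
  rw [tri_mod] at h
  exact zmod_aux4 _ h

theorem J3_res6 (n : ℕ) (h : (n : ZMod 7) = 6) :
    PowerSeries.coeff n (J 1 ^ 3) = - 7 * PowerSeries.coeff n (PowerSeries.X ^ 6 * J 49 ^ 3) := by
  rw [J_expand 49 (by norm_num), ← map_pow]
  by_cases hp : ∃ m, n = 49 * tri (m + 1) + 6
  · obtain ⟨m, rfl⟩ := hp
    rw [coeff_X_expand, ← tri_49, coeff_J3_tri, coeff_J3_tri]
    have : (-1 : ℤ) ^ (7 * m + 3) = - (-1) ^ m := by
      rw [show 7 * m + 3 = m + 1 + 2 * (3 * m + 1) by ring, pow_add, pow_mul, pow_succ]; simp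
    rw [this]; push_cast; ring
  · rw [coeff_X_expand0, coeff_J3_zero, mul_zero]
    · rintro i rfl
      rw [tri_mod] at h
      have h3 := zmod_aux5 _ h
      have h4 : i % 7 = 3 := by
        have h5 : ((i : ℕ) : ZMod 7) = ((3 : ℕ) : ZMod 7) := by rw [h3]; rfl
        rw [ZMod.natCast_eq_natCast_iff'] at h5
        exact h5
      apply hp
      refine ⟨i / 7, ?_⟩
      rw [← tri_49]
      congr 2
      omega
    · intro k hk
      apply coeff_J3_zero
      rintro m rfl
      exact hp ⟨m, hk⟩

theorem J3_rel : (fp 2 ^ 2 * fp 5 + fp 0 ^ 2 * fp 2 + fp 0 * fp 1 ^ 2 = 0) ∧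
    (fp 2 ^ 3 + 6 * (fp 0 * fp 1 * fp 5) = -7 * (PowerSeries.X ^ 6 * J 49 ^ 3)) := by
  have r0 := Res_fp 0
  have r1 := Res_fp 1
  have r2 := Res_fp 2
  have r5 := Res_fp 5
  set A2 := PowerSeries.C (3 : ℤ) * (fp 2 * fp 2 * fp 5 + fp 0 * fp 0 * fp 2 + fp 0 * fp 1 * fp 1) with hA2
  set A6 := fp 2 * fp 2 * fp 2 + PowerSeries.C (6 : ℤ) * (fp 0 * fp 1 * fp 5) with hA6
  set A0 := fp 0 * fp 0 * fp 0 + PowerSeries.C (6 : ℤ) * (fp 0 * fp 2 * fp 5) + PowerSeries.C (3 : ℤ) * (fp 1 * fp 1 * fp 5) with hA0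
  set A1 := fp 5 * fp 5 * fp 5 + PowerSeries.C (3 : ℤ) * (fp 0 * fp 0 * fp 1) + PowerSeries.C (6 : ℤ) * (fp 1 * fp 2 * fp 5) with hA1
  set A3 := fp 1 * fp 1 * fp 1 + PowerSeries.C (6 : ℤ) * (fp 0 * fp 1 * fp 2) + PowerSeries.C (3 : ℤ) * (fp 0 * fp 5 * fp 5) with hA3
  set A4 := PowerSeries.C (3 : ℤ) * (fp 0 * fp 2 * fp 2 + fp 1 * fp 1 * fp 2 + fp 1 * fp 5 * fp 5) with hA4
  set A5 := PowerSeries.C (3 : ℤ) * (fp 0 * fp 0 * fp 5 + fp 1 * fp 2 * fp 2 + fp 2 * fp 5 * fp 5) with hA5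
  have C3 : PowerSeries.C (3 : ℤ) = 3 := map_ofNat _ 3
  have C6 : PowerSeries.C (6 : ℤ) = 6 := map_ofNat _ 6
  have hsum : J 1 ^ 3 = A0 + A1 + A2 + A3 + A4 + A5 + A6 := by
    rw [J_decomp, hA0, hA1, hA2, hA3, hA4, hA5, hA6, C3, C6]
    ring
  have R2 : Res 2 A2 := Res.cmul _ (((((r2.mul r2).mul r5).congr (by decide)).add (((r0.mul r0).mul r2).congr (by decide))).add
    (((r0.mul r1).mul r1).congr (by decide)))
  have R4 : Res 4 A4 := Res.cmul _ (((((r0.mul r2).mul r2).congr (by decide)).add (((r1.mul r1).mul r2).congr (by decide))).add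
    (((r1.mul r5).mul r5).congr (by decide)))
  have R5 : Res 5 A5 := Res.cmul _ (((((r0.mul r0).mul r5).congr (by decide)).add (((r1.mul r2).mul r2).congr (by decide))).add
    (((r2.mul r5).mul r5).congr (by decide)))
  have R6 : Res 6 A6 := (((r2.mul r2).mul r2).congr (by decide)).add (Res.cmul _ (((r0.mul r1).mul r5).congr (by decide)))
  have R0 : Res 0 A0 := ((((r0.mul r0).mul r0).congr (by decide)).add (Res.cmul _ (((r0.mul r2).mul r5).congr (by decide)))).add
    (Res.cmul _ (((r1.mul r1).mul r5).congr (by decide)))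
  have R1 : Res 1 A1 := ((((r5.mul r5).mul r5).congr (by decide)).add (Res.cmul _ (((r0.mul r0).mul r1).congr (by decide)))).add
    (Res.cmul _ (((r1.mul r2).mul r5).congr (by decide)))
  have R3 : Res 3 A3 := ((((r1.mul r1).mul r1).congr (by decide)).add (Res.cmul _ (((r0.mul r1).mul r2).congr (by decide)))).add
    (Res.cmul _ (((r0.mul r5).mul r5).congr (by decide)))
  constructor
  · have hz : A2 = 0 := by
      ext n
      by_cases hn : (n : ZMod 7) = 2
      · have h := J3_res2 n hn
        rw [hsum] at h
        simp only [map_add] at h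
        rw [R0 n (by rw [hn]; decide), R1 n (by rw [hn]; decide), R3 n (by rw [hn]; decide),
          R4 n (by rw [hn]; decide), R5 n (by rw [hn]; decide), R6 n (by rw [hn]; decide)] at h
        simpa using h
      · rw [R2 n hn, map_zero]
    have h3 : PowerSeries.C (3 : ℤ) ≠ 0 := by
      intro h
      have := congrArg PowerSeries.constantCoeff h
      rw [PowerSeries.constantCoeff_C, map_zero] at this
      norm_num at this
    have := (mul_eq_zero.1 hz).resolve_left h3
    linear_combination this
  · have hz : A6 = PowerSeries.C (-7 : ℤ) * (PowerSeries.X ^ 6 * J 49 ^ 3) := by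
      ext n
      rw [PowerSeries.coeff_C_mul]
      by_cases hn : (n : ZMod 7) = 6
      · have h := J3_res6 n hn
        rw [hsum] at h
        simp only [map_add] at h
        rw [R0 n (by rw [hn]; decide), R1 n (by rw [hn]; decide), R3 n (by rw [hn]; decide),
          R4 n (by rw [hn]; decide), R5 n (by rw [hn]; decide), R2 n (by rw [hn]; decide)] at h
        simpa using h
      · rw [R6 n hn, J_expand 49 (by norm_num), ← map_pow, coeff_X_expand0, mul_zero]
        rintro k rfl
        exfalso
        apply hn
        push_cast
        rw [show (49 : ZMod 7) = 0 by decide]; simp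
    have C7 : PowerSeries.C (-7 : ℤ) = -7 := by rw [map_neg, map_ofNat]
    rw [C7] at hz
    rw [← hz, hA6, C6]
    ring

theorem D_rel : fp 0 * fp 1 * fp 5 = - (PowerSeries.X ^ 2 * J 49) ^ 3 ∧
    (PowerSeries.X ^ 2 * J 49) ^ 2 * fp 5 - fp 0 ^ 2 * (PowerSeries.X ^ 2 * J 49) + fp 0 * fp 1 ^ 2 = 0 := by
  obtain ⟨h1, h2⟩ := J3_rel
  rw [fp2] at h1 h2
  constructor
  · have h6 : PowerSeries.C (6 : ℤ) ≠ 0 := by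
      intro h
      have := congrArg PowerSeries.constantCoeff h
      rw [PowerSeries.constantCoeff_C, map_zero] at this
      norm_num at this
    have C6 : PowerSeries.C (6 : ℤ) = 6 := map_ofNat _ 6
    rw [C6] at h6
    apply mul_left_cancel₀ h6
    linear_combination h2
  · linear_combination h1

theorem prod_zeta {A : Type*} [CommRing A] [Algebra ℂ A] (ζ : ℂ) (hζ : IsPrimitiveRoot ζ 7) (y : A) :
    ∏ i ∈ Finset.range 7, (1 - algebraMap ℂ A (ζ ^ i) * y) = 1 - y ^ 7 := by
  have himg : Polynomial.nthRootsFinset 7 (1 : ℂ) = (Finset.range 7).image (fun i => ζ ^ i) := by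
    symm
    apply Finset.eq_of_subset_of_card_le
    · intro x hx
      obtain ⟨i, _, rfl⟩ := Finset.mem_image.1 hx
      rw [Polynomial.mem_nthRootsFinset (by norm_num), ← pow_mul, mul_comm, pow_mul, hζ.pow_eq_one, one_pow]
    · rw [hζ.card_nthRootsFinset, Finset.card_image_of_injOn, Finset.card_range]
      intro i hi j hj h
      exact hζ.pow_inj (by simpa using hi) (by simpa using hj) h
  have hC : ∀ w : ℂ, ∏ i ∈ Finset.range 7, (w - ζ ^ i) = w ^ 7 - 1 := by
    intro w
    have h := hζ.pow_sub_pow_eq_prod_sub_mul w 1 (by norm_num)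
    rw [himg, Finset.prod_image] at h
    · simpa using h.symm
    · intro i hi j hj h
      exact hζ.pow_inj (by simpa using hi) (by simpa using hj) h
  have hP : ∏ i ∈ Finset.range 7, (1 - Polynomial.C (ζ ^ i) * Polynomial.X) = 1 - (Polynomial.X : Polynomial ℂ) ^ 7 := by
    apply Polynomial.funext
    intro w
    rw [Polynomial.eval_prod]
    simp only [Polynomial.eval_sub, Polynomial.eval_one, Polynomial.eval_mul, Polynomial.eval_C,
      Polynomial.eval_X, Polynomial.eval_pow]
    by_cases hw : w = 0
    · simp [hw]
    · have h2 : ∀ i ∈ Finset.range 7, (1 - ζ ^ i * w) = w * (w⁻¹ - ζ ^ i) := by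
        intro i _
        field_simp
      rw [Finset.prod_congr rfl h2, Finset.prod_mul_distrib, hC, Finset.prod_const, Finset.card_range]
      field_simp
  have := congrArg (Polynomial.aeval y) hP
  simpa [map_prod] using this

/-- base change to complex coefficients -/
def mC : PowerSeries ℤ →+* PowerSeries ℂ := PowerSeries.map (Int.castRingHom ℂ)

theorem mC_inj : Function.Injective mC := by
  intro f g h
  ext n
  have := congrArg (PowerSeries.coeff n) h
  simpa [mC] using this

/-- twist -/
def sg (w : ℂ) : PowerSeries ℤ →+* PowerSeries ℂ := (PowerSeries.rescale w).comp mC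

theorem coeff_sg (w : ℂ) (n : ℕ) (f : PowerSeries ℤ) :
    PowerSeries.coeff n (sg w f) = w ^ n * ((PowerSeries.coeff n f : ℤ) : ℂ) := by
  simp [sg, mC]

theorem sg_PP (w : ℂ) (N : ℕ) : sg w (PP 1 (N + 1)) =
    sg w (PP 1 N) * (1 - PowerSeries.C (w ^ (N + 1)) * PowerSeries.X ^ (N + 1)) := by
  rw [PP_succ, map_mul, one_mul]
  congr 1
  rw [map_sub, map_one, map_pow]
  congr 1
  simp [sg, mC, mul_pow]

theorem normfac (ζ : ℂ) (hζ : IsPrimitiveRoot ζ 7) (k : ℕ) (hk : ¬ 7 ∣ k) :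
    ∏ i ∈ Finset.range 7, (1 - PowerSeries.C ((ζ ^ i) ^ k) * (PowerSeries.X : PowerSeries ℂ) ^ k) = 1 - PowerSeries.X ^ (7 * k) := by
  have hp : IsPrimitiveRoot (ζ ^ k) 7 := by
    apply hζ.pow_of_coprime
    rw [Nat.coprime_comm]
    exact (Nat.Prime.coprime_iff_not_dvd (by norm_num)).2 hk
  have h := prod_zeta (A := PowerSeries ℂ) (ζ ^ k) hp (PowerSeries.X ^ k)
  rw [← pow_mul, mul_comm k 7] at h
  rw [← h]
  refine Finset.prod_congr rfl fun i _ => ?_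
  rw [← pow_mul, ← pow_mul, mul_comm i k]
  rfl

theorem normfac7 (ζ : ℂ) (hζ : IsPrimitiveRoot ζ 7) (k : ℕ) :
    ∏ i ∈ Finset.range 7, (1 - PowerSeries.C ((ζ ^ i) ^ (7 * k)) * (PowerSeries.X : PowerSeries ℂ) ^ (7 * k)) = (1 - PowerSeries.X ^ (7 * k)) ^ 7 := by
  have : ∀ i, (ζ ^ i) ^ (7 * k) = 1 := by
    intro i
    rw [← pow_mul, show i * (7 * k) = 7 * (i * k) by ring, pow_mul, hζ.pow_eq_one, one_pow]
  simp [this]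

theorem mC_PP_succ (b N : ℕ) : mC (PP b (N + 1)) = mC (PP b N) * (1 - PowerSeries.X ^ (b * (N + 1))) := by
  rw [PP_succ, map_mul]
  congr 1
  simp [mC]

theorem norm_finite (ζ : ℂ) (hζ : IsPrimitiveRoot ζ 7) (N : ℕ) :
    (∏ i ∈ Finset.range 7, sg (ζ ^ i) (PP 1 (7 * N))) * mC (PP 49 N) = mC (PP 7 (7 * N)) * mC (PP 7 N) ^ 7 := by
  induction N with
  | zero => simp [PP_zero]
  | succ N ih =>
    have e : 7 * (N + 1) = 7 * N + 1 + 1 + 1 + 1 + 1 + 1 + 1 := by ring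
    have st : ∀ M, ∏ i ∈ Finset.range 7, sg (ζ ^ i) (PP 1 (M + 1)) = (∏ i ∈ Finset.range 7, sg (ζ ^ i) (PP 1 M)) *
        ∏ i ∈ Finset.range 7, (1 - PowerSeries.C ((ζ ^ i) ^ (M + 1)) * (PowerSeries.X : PowerSeries ℂ) ^ (M + 1)) := by
      intro M
      rw [← Finset.prod_mul_distrib]
      exact Finset.prod_congr rfl fun i _ => sg_PP _ _
    rw [e, st, st, st, st, st, st, st, ← e, normfac7 ζ hζ]
    rw [normfac ζ hζ _ (by omega), normfac ζ hζ _ (by omega), normfac ζ hζ _ (by omega), normfac ζ hζ _ (by omega),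
      normfac ζ hζ _ (by omega), normfac ζ hζ _ (by omega)]
    rw [e, mC_PP_succ 7, mC_PP_succ 7, mC_PP_succ 7, mC_PP_succ 7, mC_PP_succ 7, mC_PP_succ 7, mC_PP_succ 7, ← e,
      mC_PP_succ 7 N, mC_PP_succ 49, show 49 * (N + 1) = 7 * (7 * (N + 1)) by ring]
    generalize (PowerSeries.X : PowerSeries ℂ) ^ (7 * (N + 1)) = y0
    generalize (PowerSeries.X : PowerSeries ℂ) ^ (7 * (7 * (N + 1))) = y7
    generalize (PowerSeries.X : PowerSeries ℂ) ^ (7 * (7 * N + 1)) = y1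
    generalize (PowerSeries.X : PowerSeries ℂ) ^ (7 * (7 * N + 1 + 1)) = y2
    generalize (PowerSeries.X : PowerSeries ℂ) ^ (7 * (7 * N + 1 + 1 + 1)) = y3
    generalize (PowerSeries.X : PowerSeries ℂ) ^ (7 * (7 * N + 1 + 1 + 1 + 1)) = y4
    generalize (PowerSeries.X : PowerSeries ℂ) ^ (7 * (7 * N + 1 + 1 + 1 + 1 + 1)) = y5
    generalize (PowerSeries.X : PowerSeries ℂ) ^ (7 * (7 * N + 1 + 1 + 1 + 1 + 1 + 1)) = y6
    generalize (1 - y0) = w0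
    generalize (1 - y1) = w1
    generalize (1 - y2) = w2
    generalize (1 - y3) = w3
    generalize (1 - y4) = w4
    generalize (1 - y5) = w5
    generalize (1 - y6) = w6
    generalize (1 - y7) = w7
    linear_combination (w0 ^ 7 * w1 * w2 * w3 * w4 * w5 * w6 * w7) * ih

theorem norm_J (ζ : ℂ) (hζ : IsPrimitiveRoot ζ 7) :
    (∏ i ∈ Finset.range 7, sg (ζ ^ i) (J 1)) * mC (J 49) = mC (J 7) ^ 8 := by
  have key : ∀ N, Ideal.Quotient.mk (Ideal.span {(PowerSeries.X : PowerSeries ℂ) ^ N})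
      ((∏ i ∈ Finset.range 7, sg (ζ ^ i) (J 1)) * mC (J 49)) =
      Ideal.Quotient.mk (Ideal.span {(PowerSeries.X : PowerSeries ℂ) ^ N}) (mC (J 7) ^ 8) := by
    intro N
    set π := Ideal.Quotient.mk (Ideal.span {(PowerSeries.X : PowerSeries ℂ) ^ N}) with hπ
    have h1 : ∀ f g : PowerSeries ℂ, (∀ n < N, PowerSeries.coeff n f = PowerSeries.coeff n g) → π f = π g := by
      intro f g h
      rw [hπ, Ideal.Quotient.eq, Ideal.mem_span_singleton, PowerSeries.X_pow_dvd_iff]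
      intro n hn
      rw [map_sub, h n hn, sub_self]
    have h2 : ∀ b M, 0 < b → N ≤ M → π (mC (J b)) = π (mC (PP b M)) := by
      intro b M hb hM
      apply h1
      intro n hn
      simp [mC, coeff_PP b hb n M (by omega)]
    have h3 : ∀ w M, N ≤ M → π (sg w (J 1)) = π (sg w (PP 1 M)) := by
      intro w M hM
      apply h1
      intro n hn
      rw [coeff_sg, coeff_sg, coeff_PP 1 one_pos n M (by omega)]
    have hf := congrArg π (norm_finite ζ hζ N)
    simp only [map_mul, map_prod, map_pow] at hf ⊢
    rw [h2 49 N (by norm_num) le_rfl]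
    simp only [h3 _ (7 * N) (by omega)]
    rw [hf, ← h2 7 N (by norm_num) le_rfl, ← h2 7 (7 * N) (by norm_num) (by omega)]
    ring
  ext n
  have h := key (n + 1)
  rw [Ideal.Quotient.eq, Ideal.mem_span_singleton, PowerSeries.X_pow_dvd_iff] at h
  have := h n (by omega)
  rwa [map_sub, sub_eq_zero] at this

theorem sg_fp (w : ℂ) (hw : w ^ 7 = 1) (r : ZMod 7) (m : ℕ) (hm : (m : ZMod 7) = r) :
    sg w (fp r) = PowerSeries.C (w ^ m) * mC (fp r) := by
  ext n
  rw [coeff_sg, PowerSeries.coeff_C_mul]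
  have e : PowerSeries.coeff n (mC (fp r)) = ((PowerSeries.coeff n (fp r) : ℤ) : ℂ) := by simp [mC]
  rw [e]
  by_cases hn : (n : ZMod 7) = r
  · have h5 : ((n : ℕ) : ZMod 7) = ((m : ℕ) : ZMod 7) := by rw [hn, hm]
    rw [ZMod.natCast_eq_natCast_iff'] at h5
    rw [← Nat.div_add_mod n 7, ← Nat.div_add_mod m 7, pow_add, pow_add, pow_mul, pow_mul, hw, h5]
    simp
  · rw [Res_fp r n hn]; simp

/-- embedding in the field of complex Laurent series -/
def iC : PowerSeries ℂ →+* LaurentSeries ℂ := HahnSeries.ofPowerSeries ℤ ℂ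

theorem iC_inj : Function.Injective iC := HahnSeries.ofPowerSeries_injective

theorem poly_prod {K : Type*} [Field K] (v : ℕ → K) (hv : Set.InjOn v (Finset.range 7)) (Z : K)
    (h : ∀ i ∈ Finset.range 7, (-1)*Z^2 + (343)*v i + (49)*v i*Z + (343)*(v i)^2 + (35)*(v i)^2*Z + (147)*(v i)^3 + (7)*(v i)^3*Z + (49)*(v i)^4 + (21)*(v i)^5 + (7)*(v i)^6 + (v i)^7 = 0) :
    Z ^ 2 = ∏ i ∈ Finset.range 7, v i := by
  set L : Polynomial K := Polynomial.C ((-1)*Z^2) + Polynomial.C (343 + 49*Z) * Polynomial.X +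
    Polynomial.C (343 + 35*Z) * Polynomial.X ^ 2 + Polynomial.C (147 + 7*Z) * Polynomial.X ^ 3 +
    Polynomial.C 49 * Polynomial.X ^ 4 + Polynomial.C 21 * Polynomial.X ^ 5 + Polynomial.C 7 * Polynomial.X ^ 6 with hL
  have hLd : L.degree < 7 := by
    have : L.degree ≤ 6 := by rw [hL]; compute_degree
    exact lt_of_le_of_lt this (by norm_num)
  set P : Polynomial K := Polynomial.X ^ 7 + L with hP
  set Q : Polynomial K := ∏ i ∈ Finset.range 7, (Polynomial.X - Polynomial.C (v i)) with hQ
  have hPd : P.degree = 7 := by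
    rw [hP, Polynomial.degree_add_eq_left_of_degree_lt]
    · simp
    · simpa using hLd
  have hPm : P.Monic := Polynomial.monic_X_pow_add (by simpa using hLd)
  have hQm : Q.Monic := Polynomial.monic_prod_of_monic _ _ fun i _ => Polynomial.monic_X_sub_C _
  have hQd : Q.degree = 7 := by
    rw [hQ, Polynomial.degree_prod]
    simp
  have hPQ : P = Q := by
    refine Polynomial.eq_of_degree_sub_lt_of_eval_index_eq (Finset.range 7) hv ?_ ?_
    · have := Polynomial.degree_sub_lt_left (hPd.trans hQd.symm) hPm.ne_zero (by rw [hPm.leadingCoeff, hQm.leadingCoeff])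
      rw [hPd] at this
      simpa using this
    · intro i hi
      have hq : Q.eval (v i) = 0 := by
        rw [hQ, Polynomial.eval_prod]
        exact Finset.prod_eq_zero hi (by simp)
      rw [hq, ← h i hi, hP, hL]
      simp only [Polynomial.eval_add, Polynomial.eval_mul, Polynomial.eval_C, Polynomial.eval_X, Polynomial.eval_pow]
      ring
  have h0 := congrArg (Polynomial.eval 0) hPQ
  rw [hP, hL, hQ, Polynomial.eval_prod] at h0
  simp only [Polynomial.eval_add, Polynomial.eval_mul, Polynomial.eval_C, Polynomial.eval_X, Polynomial.eval_pow,
    Polynomial.eval_sub, zero_sub, Finset.prod_neg] at h0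
  rw [Finset.card_range] at h0
  linear_combination -h0

theorem exists_Z : ∃ (ζ : ℂ) (Z : LaurentSeries ℂ), IsPrimitiveRoot ζ 7 ∧
    (∀ i : ℕ, ∃ x : LaurentSeries ℂ, x * iC (PowerSeries.C ((ζ ^ i) ^ 2) * mC (PowerSeries.X ^ 2 * J 49)) = iC (sg (ζ ^ i) (J 1)) ∧
     (-1)*Z^2 + (343)*x + (49)*x*Z + (343)*x^2 + (35)*x^2*Z + (147)*x^3 + (7)*x^3*Z + (49)*x^4 + (21)*x^5 + (7)*x^6 + x^7 = 0) := by
  have hζ : IsPrimitiveRoot (Complex.exp (2 * Real.pi * Complex.I / (7 : ℕ))) 7 := Complex.isPrimitiveRoot_exp 7 (by norm_num)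
  set ζ := Complex.exp (2 * Real.pi * Complex.I / (7 : ℕ)) with hz
  clear_value ζ
  obtain ⟨r1, r2⟩ := D_rel
  have hG0 : iC (mC (PowerSeries.X ^ 2 * J 49)) ≠ 0 := by
    rw [map_ne_zero_iff _ iC_inj, map_ne_zero_iff _ mC_inj]
    exact mul_ne_zero (pow_ne_zero _ PowerSeries.X_ne_zero) (J_isUnit 49 (by norm_num)).ne_zero
  have q1 := congrArg (fun f => iC (mC f)) r1
  have q2 := congrArg (fun f => iC (mC f)) r2
  have f2 := fp2
  generalize PowerSeries.X ^ 2 * J 49 = g0 at q1 q2 hG0 f2 ⊢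
  simp only [map_mul, map_add, map_sub, map_neg, map_pow, map_zero] at q1 q2
  set G := iC (mC g0) with hG
  set a := iC (mC (fp 0)) / G with ha
  set b := iC (mC (fp 1)) / G with hb
  set c := iC (mC (fp 5)) / G with hc
  have ea : iC (mC (fp 0)) = a * G := by rw [ha]; field_simp
  have eb : iC (mC (fp 1)) = b * G := by rw [hb]; field_simp
  have ec : iC (mC (fp 5)) = c * G := by rw [hc]; field_simp
  rw [ea, eb, ec] at q1 q2
  have p1 : a * b * c = -1 := by
    apply mul_right_cancel₀ (pow_ne_zero 3 hG0)
    linear_combination q1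
  have p2 : c = a ^ 2 - a * b ^ 2 := by
    apply mul_right_cancel₀ (pow_ne_zero 3 hG0)
    linear_combination q2
  refine ⟨ζ, -(3*a^3*b - a*b^5 + a^7 - a^6*b^2) - 8, hζ, fun i => ?_⟩
  have hw : (ζ ^ i) ^ 7 = 1 := by rw [← pow_mul, mul_comm, pow_mul, hζ.pow_eq_one, one_pow]
  set w := ζ ^ i with hwd
  clear_value w
  set ω := iC (PowerSeries.C w) with hω
  have hω7 : ω ^ 7 = 1 := by rw [hω, ← map_pow, ← map_pow, hw, map_one, map_one]
  have hω14 : ω ^ 14 = 1 := by rw [show 14 = 7 * 2 by norm_num, pow_mul, hω7, one_pow]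
  have hω21 : ω ^ 21 = 1 := by rw [show 21 = 7 * 3 by norm_num, pow_mul, hω7, one_pow]
  have hω28 : ω ^ 28 = 1 := by rw [show 28 = 7 * 4 by norm_num, pow_mul, hω7, one_pow]
  have hω35 : ω ^ 35 = 1 := by rw [show 35 = 7 * 5 by norm_num, pow_mul, hω7, one_pow]
  have hω42 : ω ^ 42 = 1 := by rw [show 42 = 7 * 6 by norm_num, pow_mul, hω7, one_pow]
  refine ⟨(a*ω^5) + (b*ω^6) + (a*ω^5)^2 - (a*ω^5)*(b*ω^6)^2 - 1, ?_, ?_⟩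
  · rw [J_decomp]
    simp only [map_add]
    rw [sg_fp w hw 0 0 (by decide), sg_fp w hw 1 1 (by decide), sg_fp w hw 2 2 (by decide), sg_fp w hw 5 5 (by decide), f2]
    simp only [map_mul, map_neg, map_pow, ea, eb, ec, ← hG, ← hω, p2]
    linear_combination G * (a + b * ω + a ^ 2 * ω ^ 5 - a * b ^ 2 * ω ^ 5 * (ω ^ 7 + 1)) * hω7
  · apply algF (a*ω^5) (b*ω^6)
    · linear_combination (a^2*b^3) * hω28 - (a^3*b) * hω21 - p1 + a*b * p2
    · rfl
    · linear_combination (3*a^3*b) * hω21 - (a * b^5) * hω35 + a^7*hω35 - a^6*b^2*hω42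

theorem cT0 (m : ℕ) : cT 0 m = 0 := by
  rcases m with _ | _ | _ | _ | _ | _ | _ | m <;> rfl

theorem fin_alg {K : Type*} [Field K] (j1 j7 j49 q t s y Z : K) (n7 : j7 ≠ 0) (n49 : j49 ≠ 0) (nX : q ≠ 0)
    (hN : Z ^ 2 * (q ^ 2 * j49) ^ 7 * j49 = j7 ^ 8) (ht : t * j1 ^ 4 = q * j7 ^ 4) (hs : s * j7 ^ 4 = q ^ 7 * j49 ^ 4)
    (hF : (-1)*Z^2 + (343)*y + (49)*y*Z + (343)*y^2 + (35)*y^2*Z + (147)*y^3 + (7)*y^3*Z + (49)*y^4 + (21)*y^5 + (7)*y^6 + y^7 = 0)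
    (hx0 : y * (q ^ 2 * j49) = j1) :
    ∃ c : ℕ → ℕ → ℤ, (∀ m, c 0 m = 0) ∧
      t ^ 7 = s + ∑ j ∈ Finset.range 7, ∑ m ∈ Finset.range 7, (c j m : K) * (s ^ (m + 1) * t ^ j) := by
  have hsq : (Z * q ^ 7 * j49 ^ 4) ^ 2 = (j7 ^ 4) ^ 2 := by linear_combination hN
  have hts : t * s * y ^ 4 = 1 := by
    have : j7 ^ 4 * (q ^ 2 * j49) ^ 4 ≠ 0 := mul_ne_zero (pow_ne_zero _ n7) (pow_ne_zero _ (mul_ne_zero (pow_ne_zero _ nX) n49))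
    apply mul_right_cancel₀ this
    have e4 : y ^ 4 * (q ^ 2 * j49) ^ 4 = j1 ^ 4 := by rw [← hx0]; ring
    linear_combination t * s * j7 ^ 4 * e4 + t * j1 ^ 4 * hs + q ^ 7 * j49 ^ 4 * ht
  rcases sq_eq_sq_iff_eq_or_eq_neg.1 hsq with h | h
  · refine ⟨cT, cT0, ?_⟩
    have hzs : Z * s = 1 := by
      apply mul_right_cancel₀ (pow_ne_zero 4 n7)
      linear_combination Z * hs + h
    exact algT y Z t s hzs hts hF
  · refine ⟨fun j m => (-1) ^ (m + j) * cT j m, fun m => mul_eq_zero_of_right _ (cT0 m), ?_⟩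
    have hzs : Z * (-s) = 1 := by
      apply mul_right_cancel₀ (pow_ne_zero 4 n7)
      linear_combination -Z * hs - h
    have := algT y Z (-t) (-s) hzs (by linear_combination hts) hF
    have e : ∑ j ∈ Finset.range 7, ∑ m ∈ Finset.range 7,
      (((-1) ^ (m + j) * cT j m : ℤ) : K) * (s ^ (m + 1) * t ^ j) =
      - ∑ j ∈ Finset.range 7, ∑ m ∈ Finset.range 7, (cT j m : K) * ((-s) ^ (m + 1) * (-t) ^ j) := by
      rw [← Finset.sum_neg_distrib]
      refine Finset.sum_congr rfl fun j _ => ?_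
      rw [← Finset.sum_neg_distrib]
      refine Finset.sum_congr rfl fun m _ => ?_
      rw [neg_pow s, neg_pow t]
      push_cast
      ring
    rw [e]
    linear_combination -this

set_option maxHeartbeats 2000000 in
theorem mod_eq (t0 s0 : PowerSeries ℤ) (ht0 : t0 * J 1 ^ 4 = PowerSeries.X * J 7 ^ 4)
    (hs0 : s0 * J 7 ^ 4 = PowerSeries.X ^ 7 * J 49 ^ 4) :
    ∃ c : ℕ → ℕ → ℤ, (∀ m, c 0 m = 0) ∧
      t0 ^ 7 = s0 + ∑ j ∈ Finset.range 7, ∑ m ∈ Finset.range 7, (c j m : PowerSeries ℤ) * (s0 ^ (m + 1) * t0 ^ j) := by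
  obtain ⟨ζ, Z, hζ, hx⟩ := exists_Z
  choose x hx1 hx2 using hx
  have hinj : Set.InjOn x (Finset.range 7) := by
    intro i hi j hj hij
    have h1 := hx1 i
    have h2 := hx1 j
    rw [hij] at h1
    have h3 : iC (sg (ζ ^ i) (J 1) * PowerSeries.C ((ζ ^ j) ^ 2)) = iC (sg (ζ ^ j) (J 1) * PowerSeries.C ((ζ ^ i) ^ 2)) := by
      rw [map_mul, map_mul, ← h1, ← h2]
      simp only [map_mul iC]
      ring
    have h4 := congrArg (PowerSeries.coeff 0) (iC_inj h3)
    rw [PowerSeries.coeff_mul_C, PowerSeries.coeff_mul_C, coeff_sg, coeff_sg,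
      PowerSeries.coeff_zero_eq_constantCoeff_apply, constantCoeff_J 1 one_pos] at h4
    simp only [pow_zero, one_mul, Int.cast_one] at h4
    have h7 : ∀ k, (ζ ^ k) ^ 7 = 1 := fun k => by rw [← pow_mul, mul_comm, pow_mul, hζ.pow_eq_one, one_pow]
    have h5 : ζ ^ i = ζ ^ j := by
      have e : ∀ k, ζ ^ k = ((ζ ^ k) ^ 2) ^ 4 := by
        intro k
        have := h7 k
        generalize ζ ^ k = y at *
        linear_combination (-y) * this
      rw [e i, e j, h4]
    exact hζ.pow_inj (by simpa using hi) (by simpa using hj) h5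
  have hZ := poly_prod x hinj Z (fun i _ => hx2 i)
  have hprod : (∏ i ∈ Finset.range 7, x i) * iC (mC (PowerSeries.X ^ 2 * J 49)) ^ 7 =
      ∏ i ∈ Finset.range 7, iC (sg (ζ ^ i) (J 1)) := by
    rw [← Finset.prod_congr rfl (fun i _ => hx1 i)]
    have h1 : (∏ i ∈ Finset.range 7, iC (PowerSeries.C ((ζ ^ i) ^ 2))) = 1 := by
      rw [← map_prod, ← map_prod]
      have : ∏ i ∈ Finset.range 7, (ζ ^ i) ^ 2 = 1 := by
        simp only [Finset.prod_range_succ, Finset.prod_range_zero]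
        have h42 : ζ ^ 42 = 1 := by rw [show 42 = 7 * 6 by norm_num, pow_mul, hζ.pow_eq_one, one_pow]
        linear_combination h42
      rw [this, map_one, map_one]
    simp only [map_mul iC]
    rw [Finset.prod_mul_distrib, Finset.prod_mul_distrib, h1, one_mul, Finset.prod_const, Finset.card_range]
  have hN := congrArg iC (norm_J ζ hζ)
  rw [map_mul, map_prod, ← hprod, ← hZ] at hN
  have hx0 := hx1 0
  have hF := hx2 0
  have hsg : sg (ζ ^ 0) (J 1) = mC (J 1) := by
    rw [pow_zero]
    simp [sg]
  rw [hsg] at hx0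
  simp only [pow_zero, one_pow, map_one, one_mul] at hx0
  have ht := congrArg (fun f => iC (mC f)) ht0
  have hs := congrArg (fun f => iC (mC f)) hs0
  simp only [map_mul, map_pow] at ht hs hN hx0
  have n7 : iC (mC (J 7)) ≠ 0 := by
    rw [map_ne_zero_iff _ iC_inj, map_ne_zero_iff _ mC_inj]; exact (J_isUnit 7 (by norm_num)).ne_zero
  have n49 : iC (mC (J 49)) ≠ 0 := by
    rw [map_ne_zero_iff _ iC_inj, map_ne_zero_iff _ mC_inj]; exact (J_isUnit 49 (by norm_num)).ne_zero
  have nX : iC (mC PowerSeries.X) ≠ 0 := by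
    rw [map_ne_zero_iff _ iC_inj, map_ne_zero_iff _ mC_inj]; exact PowerSeries.X_ne_zero
  have tr : ∀ c : ℕ → ℕ → ℤ, iC (mC t0) ^ 7 = iC (mC s0) + ∑ j ∈ Finset.range 7, ∑ m ∈ Finset.range 7,
      (c j m : LaurentSeries ℂ) * (iC (mC s0) ^ (m + 1) * iC (mC t0) ^ j) →
      t0 ^ 7 = s0 + ∑ j ∈ Finset.range 7, ∑ m ∈ Finset.range 7, (c j m : PowerSeries ℤ) * (s0 ^ (m + 1) * t0 ^ j) := by
    intro c h
    apply mC_inj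
    apply iC_inj
    simpa only [map_pow, map_add, map_sum, map_mul, map_intCast] using h
  obtain ⟨c, c0, hc⟩ := fin_alg _ _ _ _ _ _ _ _ n7 n49 nX hN ht hs hF hx0
  exact ⟨c, c0, tr c hc⟩

theorem E7_ofPowerSeries (f : PowerSeries ℤ) : E7 (HahnSeries.ofPowerSeries ℤ ℤ f) =
    HahnSeries.ofPowerSeries ℤ ℤ (PowerSeries.expand 7 (by norm_num) f) := by
  have hneg : ∀ (g : PowerSeries ℤ) (n : ℤ), n < 0 → (HahnSeries.ofPowerSeries ℤ ℤ g).coeff n = 0 := by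
    intro g n hn
    rw [HahnSeries.ofPowerSeries_apply]
    apply HahnSeries.embDomain_of_notMem_range
    rintro ⟨m, hm⟩
    simp at hm
    omega
  ext n
  rcases lt_or_ge n 0 with hn | hn
  · rw [hneg _ _ hn]
    by_cases h7 : (7 : ℤ) ∣ n
    · obtain ⟨m, rfl⟩ := h7
      rw [E7_coeff_mul, hneg _ _ (by omega)]
    · exact E7_coeff_not _ _ h7
  · lift n to ℕ using hn
    rw [HahnSeries.ofPowerSeries_apply_coeff]
    by_cases h7 : (7 : ℤ) ∣ n
    · obtain ⟨m, hm⟩ := h7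
      lift m to ℕ using (by omega)
      obtain rfl : n = 7 * m := by omega
      push_cast
      rw [E7_coeff_mul, HahnSeries.ofPowerSeries_apply_coeff, PowerSeries.coeff_expand_mul]
    · rw [E7_coeff_not _ _ h7, PowerSeries.coeff_expand_of_not_dvd]
      omega

/-- Lemma on orders: if for `l ≤ k ≤ l+6` there are Laurent polynomials
`p_k^{(i)} ∈ ℤ[x,x⁻¹]` with `U_7(u·t^k) = v₁·p_k^{(1)}(t) + v₂·p_k^{(2)}(t) + v₃·p_k^{(3)}(t)`
and lowest exponent of `p_k^{(i)}` at least `⌈(k+s_i)/7⌉`, then such Laurent polynomials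
exist for every `k : ℤ`. Here `t = q·J_7^4/J_1^4` and `U_7` is the coefficient-extraction
operator `∑ f(n) qⁿ ↦ ∑ f(7n) qⁿ`. -/
theorem stmt6
    (T : (LaurentSeries ℤ)ˣ)
    (hT : (T : LaurentSeries ℤ) * HahnSeries.ofPowerSeries ℤ ℤ ((J 1) ^ 4)
        = HahnSeries.ofPowerSeries ℤ ℤ (PowerSeries.X * (J 7) ^ 4))
    (U : LaurentSeries ℤ → LaurentSeries ℤ)
    (hU : ∀ (f : LaurentSeries ℤ) (n : ℤ), (U f).coeff n = f.coeff (7 * n))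
    (u v₁ v₂ v₃ : LaurentSeries ℤ) (l s₁ s₂ s₃ : ℤ)
    (h : ∀ k : ℤ, l ≤ k → k ≤ l + 6 →
      ∃ p₁ p₂ p₃ : ℤ →₀ ℤ,
        U (u * ↑(T ^ k)) = v₁ * evalT T p₁ + v₂ * evalT T p₂ + v₃ * evalT T p₃ ∧
        (∀ n ∈ p₁.support, ⌈((k + s₁ : ℤ) : ℚ) / 7⌉ ≤ n) ∧
        (∀ n ∈ p₂.support, ⌈((k + s₂ : ℤ) : ℚ) / 7⌉ ≤ n) ∧
        (∀ n ∈ p₃.support, ⌈((k + s₃ : ℤ) : ℚ) / 7⌉ ≤ n)) :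
    ∀ k : ℤ,
      ∃ p₁ p₂ p₃ : ℤ →₀ ℤ,
        U (u * ↑(T ^ k)) = v₁ * evalT T p₁ + v₂ * evalT T p₂ + v₃ * evalT T p₃ ∧
        (∀ n ∈ p₁.support, ⌈((k + s₁ : ℤ) : ℚ) / 7⌉ ≤ n) ∧
        (∀ n ∈ p₂.support, ⌈((k + s₂ : ℤ) : ℚ) / 7⌉ ≤ n) ∧
        (∀ n ∈ p₃.support, ⌈((k + s₃ : ℤ) : ℚ) / 7⌉ ≤ n) := by
  obtain ⟨ju, hju⟩ := (J_isUnit 1 one_pos).pow 4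
  have hju' : (J 1 ^ 4) * (↑ju⁻¹ : PowerSeries ℤ) = 1 := by rw [← hju]; simp
  set t0 : PowerSeries ℤ := PowerSeries.X * J 7 ^ 4 * (↑ju⁻¹ : PowerSeries ℤ) with ht0d
  have ht0 : t0 * J 1 ^ 4 = PowerSeries.X * J 7 ^ 4 := by
    rw [ht0d]
    linear_combination (PowerSeries.X * J 7 ^ 4) * hju'
  have hs0 : PowerSeries.expand 7 (by norm_num) t0 * J 7 ^ 4 = PowerSeries.X ^ 7 * J 49 ^ 4 := by
    have e := congrArg (PowerSeries.expand 7 (by norm_num)) ht0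
    simp only [map_mul, map_pow, PowerSeries.expand_X] at e
    have e49 : PowerSeries.expand 7 (by norm_num) (J 7) = J 49 := by
      rw [J_expand 7 (by norm_num), ← PowerSeries.expand_mul, ← J_expand]
    rw [← J_expand 7, e49] at e
    exact e
  obtain ⟨c, c0, hc⟩ := mod_eq t0 _ ht0 hs0
  have hTt : (T : LaurentSeries ℤ) = HahnSeries.ofPowerSeries ℤ ℤ t0 := by
    have e := congrArg (HahnSeries.ofPowerSeries ℤ ℤ) hju'
    rw [map_mul, map_one] at e
    rw [ht0d, map_mul, ← hT, mul_assoc, e, mul_one]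
  have hc2 : (T : LaurentSeries ℤ) ^ 7 = E7 T + ∑ j ∈ Finset.range 7, ∑ m ∈ Finset.range 7,
      c j m • ((E7 T) ^ (m + 1) * (T : LaurentSeries ℤ) ^ j) := by
    rw [hTt, E7_ofPowerSeries, ← map_pow, hc]
    simp only [map_add, map_sum, map_mul, map_pow, map_intCast, zsmul_eq_mul]
  have conv : ∀ k, RepV T v₁ v₂ v₃ s₁ s₂ s₃ k (U (u * ↑(T ^ k))) ↔ ∃ p₁ p₂ p₃ : ℤ →₀ ℤ,
        U (u * ↑(T ^ k)) = v₁ * evalT T p₁ + v₂ * evalT T p₂ + v₃ * evalT T p₃ ∧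
        (∀ n ∈ p₁.support, ⌈((k + s₁ : ℤ) : ℚ) / 7⌉ ≤ n) ∧
        (∀ n ∈ p₂.support, ⌈((k + s₂ : ℤ) : ℚ) / 7⌉ ≤ n) ∧
        (∀ n ∈ p₃.support, ⌈((k + s₃ : ℤ) : ℚ) / 7⌉ ≤ n) := by
    intro k
    constructor
    · rintro ⟨a, b, d, h0, ⟨p₁, rfl, h1⟩, ⟨p₂, rfl, h2⟩, ⟨p₃, rfl, h3⟩⟩
      exact ⟨p₁, p₂, p₃, h0, h1, h2, h3⟩
    · rintro ⟨p₁, p₂, p₃, h0, h1, h2, h3⟩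
      exact ⟨_, _, _, h0, ⟨p₁, rfl, h1⟩, ⟨p₂, rfl, h2⟩, ⟨p₃, rfl, h3⟩⟩
  intro k
  rw [← conv]
  refine recursion_main T c c0 hc2 U hU u v₁ v₂ v₃ l s₁ s₂ s₃ ?_ k
  intro k h1 h2
  rw [conv]
  exact h k h1 h2
end
end

section
/- Every coefficient of the formal power series 8·J_2^7·J_7/(J_1^7·J_14) − 1 is divisible by 7; equivalently, the series p_0 := (8·J_2^7·J_7/(J_1^7·J_14) − 1)/7 has integer coefficients. -/
noncomputable section

lemma PP_step (b : ℕ) (hb : 1 ≤ b) (m k : ℕ) :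
    (PowerSeries.X : PowerSeries ℤ) ^ m ∣ PP b (m + k) - PP b m := by
  induction k with
  | zero => simp
  | succ k ih =>
    have h : PP b (m + (k + 1)) - PP b m
        = (PP b (m + k) - PP b m) - PP b (m + k) * PowerSeries.X ^ (b * (m + k + 1)) := by
      unfold PP
      rw [← add_assoc, Finset.prod_range_succ]
      ring
    rw [h]
    refine dvd_sub ih (Dvd.dvd.mul_left (pow_dvd_pow _ ?_) _)
    nlinarith

lemma J_sub (b : ℕ) (hb : 1 ≤ b) (N : ℕ) :
    (PowerSeries.X : PowerSeries ℤ) ^ N ∣ J b - PP b N := by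
  rw [PowerSeries.X_pow_dvd_iff]
  intro m hm
  have h1 : PowerSeries.coeff m (J b) = PowerSeries.coeff m (PP b (m + 1)) := by
    simp [J, PP, PowerSeries.coeff_mk]
  obtain ⟨k, rfl⟩ := Nat.exists_eq_add_of_le (Nat.succ_le_of_lt hm)
  have h2 := (PowerSeries.X_pow_dvd_iff.1 (PP_step b hb (m + 1) k)) m (Nat.lt_succ_self m)
  rw [map_sub] at h2 ⊢
  rw [h1]
  have h3 : m.succ + k = m + 1 + k := rfl
  rw [h3]
  linarith

lemma dvd7_iff (f : PowerSeries ℤ) (h : ∀ n, (7 : ℤ) ∣ PowerSeries.coeff n f) :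
    ∃ g : PowerSeries ℤ, f = 7 * g := by
  choose c hc using h
  refine ⟨PowerSeries.mk c, ?_⟩
  ext n
  have : (7 : PowerSeries ℤ) = PowerSeries.C 7 := by simp
  rw [this, PowerSeries.coeff_C_mul, PowerSeries.coeff_mk, hc]

lemma step7 (x : PowerSeries ℤ) : (7 : PowerSeries ℤ) ∣ (1 - x) ^ 7 - (1 - x ^ 7) :=
  ⟨-x + 3 * x ^ 2 - 5 * x ^ 3 + 5 * x ^ 4 - 3 * x ^ 5 + x ^ 6, by ring⟩

lemma PP7 (b N : ℕ) : (7 : PowerSeries ℤ) ∣ PP b N ^ 7 - PP (7 * b) N := by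
  induction N with
  | zero => simp [PP]
  | succ N ih =>
    have e : ∀ c, PP c (N + 1) = PP c N * (1 - PowerSeries.X ^ (c * (N + 1))) := fun c => by
      unfold PP
      rw [Finset.prod_range_succ]
    have h := step7 (PowerSeries.X ^ (b * (N + 1)))
    rw [← pow_mul, show b * (N + 1) * 7 = 7 * b * (N + 1) by ring] at h
    obtain ⟨u, hu⟩ := ih
    obtain ⟨v, hv⟩ := h
    rw [e, e, mul_pow, sub_eq_iff_eq_add.1 hu, sub_eq_iff_eq_add.1 hv]
    exact ⟨u * (7 * v + (1 - PowerSeries.X ^ (7 * b * (N + 1)))) + PP (7 * b) N * v, by ring⟩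

lemma J7 (b : ℕ) (hb : 1 ≤ b) : ∃ g, J b ^ 7 - J (7 * b) = 7 * g := by
  apply dvd7_iff
  intro n
  have h1 : (PowerSeries.X : PowerSeries ℤ) ^ (n + 1) ∣ J b ^ 7 - PP b (n + 1) ^ 7 :=
    (J_sub b hb (n + 1)).trans (sub_dvd_pow_sub_pow _ _ 7)
  have h2 := J_sub (7 * b) (by omega) (n + 1)
  have h3 := PowerSeries.X_pow_dvd_iff.1 (dvd_sub h1 h2) n (Nat.lt_succ_self n)
  obtain ⟨u, hu⟩ := PP7 b (n + 1)
  have h4 : J b ^ 7 - J (7 * b)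
      = (J b ^ 7 - PP b (n + 1) ^ 7 - (J (7 * b) - PP (7 * b) (n + 1))) + PowerSeries.C 7 * u := by
    have : (7 : PowerSeries ℤ) = PowerSeries.C 7 := by simp
    rw [← this, ← hu]
    ring
  rw [h4, map_add, h3, PowerSeries.coeff_C_mul, zero_add]
  exact dvd_mul_right _ _

lemma J_unit (b : ℕ) (hb : 1 ≤ b) : IsUnit (J b) := by
  rw [PowerSeries.isUnit_iff_constantCoeff]
  have : PowerSeries.constantCoeff (J b) = 1 := by
    rw [← PowerSeries.coeff_zero_eq_constantCoeff_apply]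
    have : b ≠ 0 := by omega
    simp [J, this]
  rw [this]
  exact isUnit_one

/-- every coefficient of `8·J_2^7·J_7/(J_1^7·J_14) − 1` is divisible by 7;
equivalently, there is a power series `p₀` with integer coefficients satisfying
`1 + 7·p₀ = 8·J_2^7·J_7/(J_1^7·J_14)`, i.e. `(1 + 7·p₀)·(J_1^7·J_14) = 8·J_2^7·J_7`. -/
theorem stmt8 :
    ∃ p₀ : PowerSeries ℤ,
      (1 + 7 * p₀) * ((J 1) ^ 7 * J 14) = 8 * (J 2) ^ 7 * J 7 := by
  obtain ⟨A, hA⟩ := J7 1 le_rfl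
  obtain ⟨B, hB⟩ := J7 2 (by norm_num)
  norm_num at hA hB
  obtain ⟨w, hw⟩ := (((J_unit 1 le_rfl).pow 7).mul (J_unit 14 (by norm_num))).exists_left_inv
  refine ⟨(J 7 * J 14 + 8 * B * J 7 - A * J 14) * w, ?_⟩
  linear_combination 7 * (J 7 * J 14 + 8 * B * J 7 - A * J 14) * hw + J 14 * hA - 8 * J 7 * hB
end
end

section
/- For every integer α ≥ 1, the Laurent series L_{2α} (in the d_3 tower) satisfies L_{2α} = q · (J_1^{10}/J_2^3) · ∑_{n≥0} d_3(7^{2α}·n + λ_{2α})·q^n, where λ_β = (5·7^β + 1)/6. -/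
noncomputable section

open PowerSeries in
lemma aux_stable (b : ℕ) (hb : 1 ≤ b) (n d : ℕ) :
    coeff n (∏ k ∈ Finset.range (n + 1 + d), (1 - (X : PowerSeries ℤ) ^ (b * (k + 1))))
      = coeff n (J b) := by
  induction d with
  | zero => simp [J]
  | succ d ih =>
    rw [← add_assoc, Finset.prod_range_succ, mul_sub, mul_one, map_sub, ih, coeff_mul_X_pow',
      if_neg, sub_zero]
    nlinarith

open PowerSeries in
lemma aux_J (b : ℕ) (hb : 1 ≤ b) : J (49 * b) = expand 49 (by norm_num) (J b) := by
  have key : ∀ n, coeff n (J (49 * b)) = coeff n (expand 49 (by norm_num)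
      (∏ k ∈ Finset.range (n + 1), (1 - (X : PowerSeries ℤ) ^ (b * (k + 1))))) := by
    intro n
    simp only [J, coeff_mk, map_prod, map_sub, map_one, map_pow, expand_X, ← pow_mul, mul_assoc]
  ext n
  rw [key]
  by_cases h : 49 ∣ n
  · obtain ⟨m, rfl⟩ := h
    rw [coeff_expand_mul, coeff_expand_mul]
    have := aux_stable b hb m (48 * m)
    rw [← this]
    congr 3
    ring
  · rw [coeff_expand_of_not_dvd _ _ _ h, coeff_expand_of_not_dvd _ _ _ h]

open PowerSeries in
lemma aux_J0 (b : ℕ) (hb : 1 ≤ b) : constantCoeff (J b) = 1 := by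
  rw [← coeff_zero_eq_constantCoeff_apply]
  have : b ≠ 0 := by omega
  simp [J, this]

/-- extraction of every 49th coefficient -/
def W (f : PowerSeries ℤ) : PowerSeries ℤ := PowerSeries.mk fun n => PowerSeries.coeff (49 * n) f

open PowerSeries in
lemma aux_W (f g : PowerSeries ℤ) : W (f * expand 49 (by norm_num) g) = W f * g := by
  ext n
  simp only [W, coeff_mk, coeff_mul]
  symm
  apply Finset.sum_of_injOn (fun x => (49 * x.1, 49 * x.2))
  · rintro ⟨a, b⟩ _ ⟨c, d⟩ _ h
    simp only [Prod.mk.injEq] at h ⊢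
    omega
  · rintro ⟨a, b⟩ h
    have h := Finset.HasAntidiagonal.mem_antidiagonal.1 (Finset.mem_coe.1 h)
    refine Finset.mem_coe.2 (Finset.HasAntidiagonal.mem_antidiagonal.2 ?_)
    simp only at h ⊢
    omega
  · rintro ⟨a, b⟩ h h'
    rw [coeff_expand_of_not_dvd, mul_zero]
    rintro ⟨c, hc⟩
    apply h'
    have h := Finset.HasAntidiagonal.mem_antidiagonal.1 h
    simp only at h hc
    refine ⟨(n - c, c), ?_, ?_⟩
    · refine Finset.mem_coe.2 (Finset.HasAntidiagonal.mem_antidiagonal.2 ?_)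
      simp only
      omega
    · simp only [Prod.mk.injEq]; omega
  · rintro ⟨a, b⟩ h
    simp

open PowerSeries in
lemma aux_step
    (U : LaurentSeries ℤ → LaurentSeries ℤ)
    (hU : ∀ (f : LaurentSeries ℤ) (n : ℤ), (U f).coeff n = f.coeff (7 * n))
    (A3 : LaurentSeries ℤ)
    (hA3 : A3 * HahnSeries.ofPowerSeries ℤ ℤ ((J 1) ^ 10 * (J 98) ^ 3)
        = HahnSeries.ofPowerSeries ℤ ℤ (PowerSeries.X ^ 8 * (J 2) ^ 3 * (J 49) ^ 10))
    (l : LaurentSeries ℤ) (S : PowerSeries ℤ)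
    (h : l * HahnSeries.ofPowerSeries ℤ ℤ ((J 2) ^ 3)
      = HahnSeries.ofPowerSeries ℤ ℤ ((J 1) ^ 10 * S)) :
    U (U (A3 * l)) * HahnSeries.ofPowerSeries ℤ ℤ ((J 2) ^ 3)
      = HahnSeries.ofPowerSeries ℤ ℤ
        (PowerSeries.X * (J 1) ^ 10 * PowerSeries.mk fun n => coeff (49 * n + 41) S) := by
  have hJ : ∀ b, 1 ≤ b → J b ≠ 0 := by
    intro b hb h0
    have := aux_J0 b hb
    simp [h0] at this
  have hu : IsUnit ((J 98) ^ 3) := by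
    apply IsUnit.pow
    rw [isUnit_iff_constantCoeff, aux_J0 98 (by norm_num)]
    exact isUnit_one
  obtain ⟨u, hu⟩ := hu.exists_right_inv
  set p : PowerSeries ℤ := X ^ 8 * J 49 ^ 10 * S * u with hp
  have hp1 : p * J 98 ^ 3 = X ^ 8 * S * J 49 ^ 10 := by
    rw [hp]; linear_combination (X ^ 8 * J 49 ^ 10 * S) * hu
  have e : A3 * l = HahnSeries.ofPowerSeries ℤ ℤ p := by
    have hne : HahnSeries.ofPowerSeries ℤ ℤ (J 1 ^ 10 * J 98 ^ 3 * J 2 ^ 3) ≠ 0 := by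
      rw [Ne, map_eq_zero_iff _ HahnSeries.ofPowerSeries_injective]
      have := hJ 1 (by norm_num)
      have := hJ 2 (by norm_num)
      have := hJ 98 (by norm_num)
      positivity
    apply mul_right_cancel₀ hne
    have h1 : A3 * l * HahnSeries.ofPowerSeries ℤ ℤ (J 1 ^ 10 * J 98 ^ 3 * J 2 ^ 3)
      = (A3 * HahnSeries.ofPowerSeries ℤ ℤ ((J 1) ^ 10 * (J 98) ^ 3)) *
        (l * HahnSeries.ofPowerSeries ℤ ℤ ((J 2) ^ 3)) := by
      rw [map_mul _ (J 1 ^ 10 * J 98 ^ 3)]; ring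
    rw [h1, hA3, h, ← map_mul, ← map_mul]
    refine congrArg _ ?_
    linear_combination (-J 1 ^ 10 * J 2 ^ 3) * hp1
  have hW : U (U (A3 * l)) = HahnSeries.ofPowerSeries ℤ ℤ (W p) := by
    ext n
    rw [hU, hU, e, PowerSeries.coeff_coe, PowerSeries.coeff_coe]
    by_cases hn : n < 0
    · rw [if_pos hn, if_pos (by omega)]
    · rw [if_neg hn, if_neg (by omega), W, coeff_mk]
      congr 2
      omega
  rw [hW, ← map_mul]
  refine congrArg _ ?_
  have e1 : J 49 = expand 49 (by norm_num) (J 1) := aux_J 1 le_rfl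
  have e2 : J 98 = expand 49 (by norm_num) (J 2) := aux_J 2 (by norm_num)
  rw [e1, e2, ← map_pow, ← map_pow] at hp1
  have := congrArg W hp1
  rw [aux_W, aux_W] at this
  rw [this]
  have e3 : W (X ^ 8 * S) = X * PowerSeries.mk fun n => coeff (49 * n + 41) S := by
    ext n
    rw [W, coeff_mk, coeff_X_pow_mul']
    cases n with
    | zero => simp
    | succ n =>
      rw [coeff_succ_X_mul, coeff_mk, if_pos (by omega)]
      congr 2
  rw [e3]; ring

/-- in the d₃ tower (`A₃ = q^8·J_2^3·J_49^{10}/(J_1^{10}·J_98^3)`, `L_0 = 1`,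
`L_{2β+1} = U_7(A₃·L_{2β})`, `L_{2β+2} = U_7(L_{2β+1})`), for every `α ≥ 1`:
`L_{2α} = q·(J_1^{10}/J_2^3)·∑_{n≥0} d_3(7^{2α}·n + λ_{2α})·qⁿ`, with `λ_β = (5·7^β+1)/6`;
stated multiplied through by the invertible series `J_2^3`. -/
theorem stmt10
    (d3 : ℕ → ℤ) (hd : PowerSeries.mk d3 * (J 1) ^ 10 = (J 2) ^ 3)
    (U : LaurentSeries ℤ → LaurentSeries ℤ)
    (hU : ∀ (f : LaurentSeries ℤ) (n : ℤ), (U f).coeff n = f.coeff (7 * n))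
    (A3 : LaurentSeries ℤ)
    (hA3 : A3 * HahnSeries.ofPowerSeries ℤ ℤ ((J 1) ^ 10 * (J 98) ^ 3)
        = HahnSeries.ofPowerSeries ℤ ℤ (PowerSeries.X ^ 8 * (J 2) ^ 3 * (J 49) ^ 10))
    (L : ℕ → LaurentSeries ℤ) (hL0 : L 0 = 1)
    (hLodd : ∀ β : ℕ, L (2 * β + 1) = U (A3 * L (2 * β)))
    (hLeven : ∀ β : ℕ, L (2 * β + 2) = U (L (2 * β + 1)))
    (α : ℕ) (hα : 1 ≤ α) :
    L (2 * α) * HahnSeries.ofPowerSeries ℤ ℤ ((J 2) ^ 3)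
      = HahnSeries.ofPowerSeries ℤ ℤ
          (PowerSeries.X * (J 1) ^ 10 *
            PowerSeries.mk fun n =>
              d3 (7 ^ (2 * α) * n + (5 * 7 ^ (2 * α) + 1) / 6)) := by
  obtain ⟨m, rfl⟩ : ∃ m, α = m + 1 := ⟨α - 1, by omega⟩
  clear hα
  induction m with
  | zero =>
    have := aux_step U hU A3 hA3 (L 0) (PowerSeries.mk d3)
      (by rw [hL0, one_mul, ← hd, mul_comm])
    have h1 := hLodd 0
    have h2 := hLeven 0
    simp only [mul_zero, zero_add] at h1 h2
    rw [← h1, ← h2] at this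
    simpa using this
  | succ m ih =>
    have := aux_step U hU A3 hA3 (L (2 * (m + 1))) (PowerSeries.X * PowerSeries.mk fun n =>
              d3 (7 ^ (2 * (m + 1)) * n + (5 * 7 ^ (2 * (m + 1)) + 1) / 6))
      (by rw [ih]; congr 1; ring)
    rw [← hLodd, ← hLeven] at this
    rw [show 2 * (m + 1 + 1) = 2 * (m + 1) + 2 by ring, this]
    congr 2
    ext n
    rw [PowerSeries.coeff_mk, PowerSeries.coeff_mk, PowerSeries.coeff_succ_X_mul,
      PowerSeries.coeff_mk]
    congr 1
    have hdiv : (5 * 7 ^ (2 * (m + 1)) + 1) % 6 = 0 := by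
      rw [pow_mul, Nat.add_mod, Nat.mul_mod, Nat.pow_mod]; norm_num
    have : (7 : ℕ) ^ (2 * (m + 1) + 2) = 49 * 7 ^ (2 * (m + 1)) := by ring
    rw [this]
    generalize 7 ^ (2 * (m + 1)) = y at *
    have h3 : (5 * (49 * y) + 1) / 6 = 40 * y + (5 * y + 1) / 6 := by omega
    rw [h3]; ring
end
end
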